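/- Let G be a finitely generated group that splits as a graph of groups (a minimal, non-elliptic action without inversions on a simplicial tree T), with every edge group finitely generated, undistorted in G, and satisfying (∂_M E, G) = ∅. If the relative Morse boundary (∂_M V, G) is totally disconnected for every vertex group V ≤ G, then the Morse boundary ∂_M G is totally disconnected. -/

import Mathlib

/-!
Proof idea. Fix a vertex `p` of the tree `T` and consider the orbit map `g ↦ g • p`. To an edge
`{a, b}` of `T` belongs its edge set `Eset`, the endpoints of those edges of the Cayley graph whose
images are separated by `{a, b}`; it is at bounded distance from the stabiliser of `{a, b}`, with
constants that are made uniform over all edges by `edge_uniform`. A limiting argument shows that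
Morse rays leave any neighbourhood of an edge set in a time depending only on the gauge
(`leaves_edge`): otherwise some Morse ray stays close to the edge group, which is undistorted, so
by `transfer` it gives a point of the relative Morse boundary of the edge group, and that boundary
is empty. Hence every edge divides the Morse boundary into two clopen halves (`isClopen_Mside`),
and a connected set `K` of boundary points lies in one half for each edge.

If from every vertex `K` lies beyond one of the edges at that vertex, then following these edges
leads to an end of `T`. Any two rays representing points of `K` meet the edge sets along the way,
which are uniformly quasi-geodesically connected and leave every ball, and `fellow_travel` shows
that such Morse rays are asymptotic; so `K` has at most one point (`subsingleton_of_end`).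

Otherwise there is a vertex `x` such that `K` is on the side of `x` of all edges at `x`. Rays
representing points of `K` then stay close to the stabiliser of `x`, uniformly in terms of the gauge
(`ray_near_vertex`). This vertex group is finitely generated and undistorted, as the edge groups
are undistorted (`vertex_undistorted`), so these rays have companions in it. The correspondence is
closed (`isClosed_push`), so `K` is the image of a connected subset of the relative Morse boundary
of the vertex group, which has at most one point by hypothesis (`subsingleton_of_vertex`).
-/

open Set Filter Topology
open scoped ENNReal

namespace MorseGoG

/-! ## Metric notions relative to an explicit distance function

Throughout, distances are given by an explicit function `d : X → X → ℝ`, so that the same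
notions apply to metric spaces (`d = dist`), to groups with word metrics, and to subgroups
with their own word metrics. -/

variable {X : Type*}

/-- `γ` is a `C`-quasi-geodesic on the parameter set `I ⊆ ℝ` with respect to `d`:
`C ≥ 1` and `|s−t|/C − C ≤ d (γ s) (γ t) ≤ C|s−t| + C` for all `s, t ∈ I`. -/
def IsQG (d : X → X → ℝ) (C : ℝ) (I : Set ℝ) (γ : ℝ → X) : Prop :=
  1 ≤ C ∧ ∀ s ∈ I, ∀ t ∈ I,
    |s - t| / C - C ≤ d (γ s) (γ t) ∧ d (γ s) (γ t) ≤ C * |s - t| + C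

/-- `x` lies in the (closed) `r`-neighbourhood of `A` with respect to `d`. -/
def InNbhd (d : X → X → ℝ) (A : Set X) (r : ℝ) (x : X) : Prop :=
  ∃ a ∈ A, d x a ≤ r

/-- The set `A` (e.g. the image of a quasi-geodesic) is `N`-Morse with respect to `d`:
every `C`-quasi-geodesic segment with endpoints on `A` is contained in the
`N C`-neighbourhood of `A`. -/
def MorseSet (d : X → X → ℝ) (N : ℝ → ℝ) (A : Set X) : Prop :=
  ∀ C : ℝ, 1 ≤ C → ∀ a b : ℝ, a ≤ b → ∀ α : ℝ → X,
    IsQG d C (Set.Icc a b) α → α a ∈ A → α b ∈ A →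
    ∀ t ∈ Set.Icc a b, InNbhd d A (N C) (α t)

/-- `A` is Morse: it is `N`-Morse for some Morse gauge `N`. -/
def IsMorse (d : X → X → ℝ) (A : Set X) : Prop := ∃ N : ℝ → ℝ, MorseSet d N A

/-- A discrete geodesic ray: the sequence of vertices of a geodesic ray in a graph. -/
def IsGeodSeq (d : X → X → ℝ) (γ : ℕ → X) : Prop :=
  ∀ m n : ℕ, d (γ m) (γ n) = |(m : ℝ) - (n : ℝ)|

/-- A discrete geodesic segment of length `n`. -/
def IsGeodSeg (d : X → X → ℝ) (n : ℕ) (γ : ℕ → X) : Prop :=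
  ∀ i ≤ n, ∀ j ≤ n, d (γ i) (γ j) = |(i : ℝ) - (j : ℝ)|

/-- A discrete `C`-quasi-geodesic ray. -/
def IsQGSeq (d : X → X → ℝ) (C : ℝ) (γ : ℕ → X) : Prop :=
  1 ≤ C ∧ ∀ m n : ℕ,
    |(m : ℝ) - n| / C - C ≤ d (γ m) (γ n) ∧ d (γ m) (γ n) ≤ C * |(m : ℝ) - n| + C

/-- Two sets are at finite Hausdorff distance with respect to `d`. -/
def BddHD (d : X → X → ℝ) (A B : Set X) : Prop :=
  ∃ r : ℝ, (∀ a ∈ A, InNbhd d B r a) ∧ (∀ b ∈ B, InNbhd d A r b)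

/-- A discrete edge path with `n` steps: consecutive points are at distance at most `1`
(i.e. equal or joined by an edge, in a graph whose vertex set carries the metric `d`). -/
def IsEdgePath (d : X → X → ℝ) (n : ℕ) (c : ℕ → X) : Prop :=
  ∀ i < n, d (c i) (c (i + 1)) ≤ 1

/-- Combinatorial divergence of a discrete ray `γ` in a graph with vertex distance `d`:
the infimum, over `s ≥ r` and over edge paths joining `γ (s - r)` to `γ (s + r)` and
avoiding the ball of radius `ε·r` around `γ s`, of the length of the path. -/
noncomputable def gdivergence (d : X → X → ℝ) (γ : ℕ → X) (r : ℕ) (ε : ℝ) : ℝ≥0∞ :=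
  ⨅ (s : ℕ) (_ : r ≤ s) (n : ℕ) (c : ℕ → X) (_ : IsEdgePath d n c)
    (_ : c 0 = γ (s - r)) (_ : c n = γ (s + r))
    (_ : ∀ i ≤ n, ε * r < d (c i) (γ s)), (n : ℝ≥0∞)

/-! ## Geodesic metric spaces, geodesic rays, divergence -/

variable {Y : Type*} [MetricSpace Y]

/-- A geodesic metric space: any two points are joined by an isometrically parametrised path. -/
def IsGeodesicSpace (Y : Type*) [MetricSpace Y] : Prop :=
  ∀ x y : Y, ∃ γ : ℝ → Y, γ 0 = x ∧ γ (dist x y) = y ∧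
    ∀ s ∈ Set.Icc 0 (dist x y), ∀ t ∈ Set.Icc 0 (dist x y), dist (γ s) (γ t) = |s - t|

/-- A geodesic ray (defined on `[0,∞)` and extended constantly to negative times). -/
def IsGeodRay (γ : ℝ → Y) : Prop :=
  (∀ s t : ℝ, 0 ≤ s → 0 ≤ t → dist (γ s) (γ t) = |s - t|) ∧ ∀ t : ℝ, γ t = γ (max t 0)

theorem IsGeodRay.lipschitz {γ : ℝ → Y} (h : IsGeodRay γ) : LipschitzWith 1 γ := by
  apply LipschitzWith.of_dist_le_mul
  intro s t
  rw [h.2 s, h.2 t, h.1 _ _ (le_max_right s 0) (le_max_right t 0)]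
  rw [NNReal.coe_one, one_mul, Real.dist_eq]
  exact abs_max_sub_max_le_abs s t 0

/-- Divergence function `δ_γ(r, ε)` of a quasi-geodesic ray `γ` in a metric space:
the infimum of lengths (total variations) of paths connecting `γ (s - r)` to `γ (s + r)`
outside the closed ball `B(γ s, εr)`, over all `s ≥ r`. -/
noncomputable def divergence (γ : ℝ → Y) (r ε : ℝ) : ℝ≥0∞ :=
  ⨅ (s : ℝ) (_ : r ≤ s) (c : ℝ → Y) (_ : ContinuousOn c (Set.Icc 0 1))
    (_ : c 0 = γ (s - r)) (_ : c 1 = γ (s + r))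
    (_ : ∀ t ∈ Set.Icc (0 : ℝ) 1, ε * r < dist (c t) (γ s)),
    eVariationOn c (Set.Icc 0 1)

/-- Quasi-isometric embedding between sets carrying explicit distance functions. -/
def IsQIEmb {Z W : Type*} (dZ : Z → Z → ℝ) (dW : W → W → ℝ) (f : Z → W) : Prop :=
  ∃ C : ℝ, 1 ≤ C ∧ ∀ z z' : Z,
    dZ z z' / C - C ≤ dW (f z) (f z') ∧ dW (f z) (f z') ≤ C * dZ z z' + C

/-! ## The Morse boundary of a proper geodesic metric space -/

/-- A Morse geodesic ray based at `p` in the metric space `Y`. -/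
structure MRay (Y : Type*) [MetricSpace Y] (p : Y) where
  ray : ℝ → Y
  base : ray 0 = p
  geod : IsGeodRay ray
  morse : IsMorse dist (Set.range ray)

/-- Two rays are identified when they are at finite Hausdorff distance. -/
def mrayRel (p : Y) (x y : MRay Y p) : Prop :=
  BddHD dist (Set.range x.ray) (Set.range y.ray)

/-- The Morse boundary of a metric space, as a set: Morse geodesic rays based at `p`,
modulo finite Hausdorff distance. -/
def MorseBoundarySp (Y : Type*) [MetricSpace Y] (p : Y) : Type _ := Quot (mrayRel p)

/-- The `N`-Morse stratum: `N`-Morse geodesic rays based at `p`. -/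
def NRaysSp (Y : Type*) [MetricSpace Y] (p : Y) (N : ℝ → ℝ) : Type _ :=
  {γ : MRay Y p // MorseSet dist N (Set.range γ.ray)}

/-- Each stratum of rays carries the compact-open topology (as a set of continuous maps). -/
noncomputable instance NRaysSp.instTop (p : Y) (N : ℝ → ℝ) : TopologicalSpace (NRaysSp Y p N) :=
  TopologicalSpace.induced
    (fun γ => (⟨γ.1.ray, γ.1.geod.lipschitz.continuous⟩ : C(ℝ, Y))) inferInstance

/-- The Morse boundary carries the direct limit topology over all Morse gauges:
a set is open iff its intersection with each stratum `∂_M^N Y_p` is open there. -/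
noncomputable instance MorseBoundarySp.instTop (p : Y) :
    TopologicalSpace (MorseBoundarySp Y p) :=
  ⨆ N : ℝ → ℝ,
    TopologicalSpace.coinduced (fun γ : NRaysSp Y p N => Quot.mk (mrayRel p) γ.1) inferInstance

/-- The relative Morse boundary `(∂_M Y, f)` of a quasi-isometric embedding `f : Y → X`:
classes of Morse rays of `Y` whose image under `f` is Morse in `X`.  It is a subset of
`∂_M Y` (and carries the subspace topology). -/
def relBoundarySp {Y X : Type*} [MetricSpace Y] [MetricSpace X] (p : Y) (f : Y → X) :
    Set (MorseBoundarySp Y p) :=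
  {ξ | ∃ γ : MRay Y p, Quot.mk (mrayRel p) γ = ξ ∧ IsMorse dist (f '' Set.range γ.ray)}

/-! ## Word metrics and Morse boundaries of finitely generated groups -/

variable {G : Type*} [Group G]

/-- Word length of `g` with respect to the (symmetrised) alphabet `S`. -/
noncomputable def wordLength (S : Set G) (g : G) : ℕ :=
  sInf {n : ℕ | ∃ l : List G, l.length = n ∧ (∀ x ∈ l, x ∈ S ∨ x⁻¹ ∈ S) ∧ l.prod = g}

/-- Word metric on `G` with respect to `S`; this is the distance between vertices in the
Cayley graph `Cay(G, S)`. -/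
noncomputable def wdist (S : Set G) (g h : G) : ℝ := wordLength S (g⁻¹ * h)

/-- A Morse geodesic ray in the Cayley graph of `(G, S)`, based at the identity,
recorded by its sequence of vertices. -/
structure GRay (G : Type*) [Group G] (S : Set G) where
  seq : ℕ → G
  base : seq 0 = 1
  geod : IsGeodSeq (wdist S) seq
  morse : IsMorse (wdist S) (Set.range seq)

/-- Identification of rays at finite Hausdorff distance. -/
def grayRel (S : Set G) (x y : GRay G S) : Prop :=
  BddHD (wdist S) (Set.range x.seq) (Set.range y.seq)

/-- The Morse boundary `∂_M G` of the group `G` with finite generating set `S`. -/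
def MorseBoundary (G : Type*) [Group G] (S : Set G) : Type _ := Quot (grayRel (G := G) S)

/-- The stratum of `N`-Morse rays. -/
def NGRays (G : Type*) [Group G] (S : Set G) (N : ℝ → ℝ) : Type _ :=
  {γ : GRay G S // MorseSet (wdist S) N (Set.range γ.seq)}

/-- The compact-open topology on a stratum: for rays in a graph (vertex sequences) this is
the topology of pointwise convergence of the vertex sequences, `G` being discrete. -/
noncomputable instance NGRays.instTop (S : Set G) (N : ℝ → ℝ) :
    TopologicalSpace (NGRays G S N) :=
  TopologicalSpace.induced (fun γ => γ.1.seq)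
    (@Pi.topologicalSpace ℕ (fun _ => G) (fun _ => ⊥))

/-- The direct limit topology on the Morse boundary of a group. -/
noncomputable instance MorseBoundary.instTop (S : Set G) :
    TopologicalSpace (MorseBoundary G S) :=
  ⨆ N : ℝ → ℝ,
    TopologicalSpace.coinduced (fun γ : NGRays G S N => Quot.mk (grayRel S) γ.1) inferInstance

/-! ## Subgroups: undistortion, relative Morse boundaries -/

/-- `H` is finitely generated and undistorted in `(G, S)`: it has a finite generating set
whose word metric is bi-Lipschitz equivalent (suitably, quasi-isometric) to the metric
induced from `G`. -/
def FGUndistorted (S : Set G) (H : Subgroup G) : Prop :=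
  ∃ T : Finset H, Subgroup.closure (T : Set H) = ⊤ ∧
    ∃ C : ℝ, 1 ≤ C ∧ ∀ h h' : H,
      wdist (T : Set H) h h' ≤ C * wdist S (h : G) (h' : G) + C ∧
      wdist S (h : G) (h' : G) ≤ C * wdist (T : Set H) h h' + C

/-- The relative Morse boundary of `H` in `G` is empty, `(∂_M H, G) = ∅`:
no Morse geodesic ray of `H` (w.r.t. any finite generating set of `H`) remains Morse in `G`. -/
def RelMorseEmpty (S : Set G) (H : Subgroup G) : Prop :=
  ∀ T : Finset H, Subgroup.closure (T : Set H) = ⊤ →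
    ∀ γ : ℕ → H, IsGeodSeq (wdist (T : Set H)) γ →
      IsMorse (wdist (T : Set H)) (Set.range γ) →
      ¬ IsMorse (wdist S) (Set.range fun n => (γ n : G))

/-- The image of the natural injection `(∂_M H, G) ↪ ∂_M G`: those classes in `∂_M G`
having a representative ray staying at bounded distance from `H`. -/
def relBdryImage (S : Set G) (H : Subgroup G) : Set (MorseBoundary G S) :=
  {ξ | ∃ γ : GRay G S, Quot.mk (grayRel S) γ = ξ ∧
        ∃ r : ℝ, ∀ n : ℕ, ∃ h ∈ H, wdist S (γ.seq n) h ≤ r}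

/-- The relative Morse boundary `(∂_M H, G)` as a subset of `∂_M H` (where `∂_M H` is
formed w.r.t. a generating set `T` of `H`): classes of rays that remain Morse in `G`. -/
def relBdryIn (S : Set G) (H : Subgroup G) (T : Set H) : Set (MorseBoundary H T) :=
  {ξ | ∃ γ : GRay H T, Quot.mk (grayRel T) γ = ξ ∧
        IsMorse (wdist S) (Set.range fun n => (γ.seq n : G))}

/-- Specification of the natural map `∂_M H → ∂_M G` (or of its restriction to the relative
boundary): each class is sent to the class of a ray of `G` at finite Hausdorff distance
from the image of (a representative of) the given class. -/
def InclSpec (S : Set G) (H : Subgroup G) (TH : Set H)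
    (F : MorseBoundary H TH → MorseBoundary G S) : Prop :=
  ∀ γ : GRay H TH, ∀ β : GRay G S,
    Quot.mk (grayRel S) β = F (Quot.mk (grayRel TH) γ) →
    BddHD (wdist S) (Set.range fun n => ((γ.seq n : G))) (Set.range β.seq)

/-! ## Asymptotic cones and relatively wide subgroups -/

/-- Admissible sequences for an asymptotic cone: sequences at bounded rescaled distance
from the basepoints `o`. -/
def conePts (ω : Ultrafilter ℕ) (d : X → X → ℝ) (o : ℕ → X) (s : ℕ → ℝ) : Set (ℕ → X) :=
  {x | ∃ B : ℝ, ∀ᶠ n in (ω : Filter ℕ), d (o n) (x n) ≤ B * s n}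

/-- The pseudo-distance of the asymptotic cone: ultralimit of the rescaled distances. -/
noncomputable def coneDist (ω : Ultrafilter ℕ) (d : X → X → ℝ) (s : ℕ → ℝ)
    (x y : ℕ → X) : ℝ :=
  limUnder (ω : Filter ℕ) (fun n => d (x n) (y n) / s n)

/-- The topology of the asymptotic cone, as a topology on representative sequences:
generated by the open balls of the cone pseudo-distance. -/
noncomputable def coneTop (ω : Ultrafilter ℕ) (d : X → X → ℝ) (o : ℕ → X) (s : ℕ → ℝ) :
    TopologicalSpace (ℕ → X) :=
  TopologicalSpace.generateFrom
    {U | ∃ c ∈ conePts ω d o s, ∃ ε : ℝ, 0 < ε ∧ U = {x | coneDist ω d s c x < ε}}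

/-- `z` is a cut point of the asymptotic cone separating the points `x` and `y`:
`x, y` differ from `z` and do not lie in a common connected subset of the complement
of (the point represented by) `z`. -/
def ConeSeparates (ω : Ultrafilter ℕ) (d : X → X → ℝ) (o : ℕ → X) (s : ℕ → ℝ)
    (x y z : ℕ → X) : Prop :=
  coneDist ω d s x z ≠ 0 ∧ coneDist ω d s y z ≠ 0 ∧
  ¬ ∃ A : Set (ℕ → X),
      A ⊆ {w ∈ conePts ω d o s | coneDist ω d s w z ≠ 0} ∧ x ∈ A ∧ y ∈ A ∧
      @IsPreconnected (ℕ → X) (coneTop ω d o s) A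

/-- `H` is relatively wide in `(G, S)`: in every asymptotic cone of `G` (over a
non-principal ultrafilter, arbitrary basepoints and scaling factors tending to infinity),
no two limit points of `H` are separated by a cut point. -/
def RelativelyWide (S : Set G) (H : Subgroup G) : Prop :=
  ∀ ω : Ultrafilter ℕ, (ω : Filter ℕ) ≤ Filter.cofinite →
  ∀ (o : ℕ → G) (s : ℕ → ℝ), (∀ n, 0 < s n) → Tendsto s atTop atTop →
  ∀ x y z : ℕ → G, (∀ n, x n ∈ H) → (∀ n, y n ∈ H) →
    x ∈ conePts ω (wdist S) o s → y ∈ conePts ω (wdist S) o s →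
    z ∈ conePts ω (wdist S) o s →
    ¬ ConeSeparates ω (wdist S) o s x y z

/-- The subgroup `H ≤ V` is relatively wide in `V` (for any, equivalently some, finite
generating set of `V`). -/
def RelWideIn (V H : Subgroup G) : Prop :=
  ∀ SV : Finset V, Subgroup.closure (SV : Set V) = ⊤ →
    RelativelyWide (SV : Set V) (H.subgroupOf V)

/-! ## Actions on simplicial trees -/

variable {VT : Type*}

/-- `G` splits as a graph of groups: it acts on the simplicial tree `T`
(preserving adjacency), minimally, non-elliptically and without inversions. -/
def ActsOnTree (G : Type*) [Group G] {VT : Type*} (T : SimpleGraph VT) [MulAction G VT] :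
    Prop :=
  T.IsTree ∧
  (∀ (g : G) (a b : VT), T.Adj a b → T.Adj (g • a) (g • b)) ∧
  (∀ (g : G) (a b : VT), T.Adj a b → ¬(g • a = b ∧ g • b = a)) ∧
  (¬ ∃ v : VT, ∀ g : G, g • v = v) ∧
  (∀ W : Set VT, W.Nonempty → (∀ (g : G), ∀ v ∈ W, g • v ∈ W) →
    (∀ a ∈ W, ∀ b ∈ W, ∀ c : VT, T.dist a c + T.dist c b = T.dist a b → c ∈ W) →
    W = Set.univ)

/-- The stabiliser of the edge `{a, b}` (pointwise; for actions without inversions this is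
the full edge stabiliser). -/
def edgeStab (G : Type*) [Group G] {VT : Type*} [MulAction G VT] (a b : VT) : Subgroup G :=
  MulAction.stabilizer G a ⊓ MulAction.stabilizer G b

/-- The halfspace determined by the edge `{a, b}` containing `b`: one of the two connected
components of the complement of the open edge. -/
def halfspace {VT : Type*} (T : SimpleGraph VT) (a b : VT) : Set VT :=
  {v | T.dist v b < T.dist v a}

end MorseGoG

namespace MorseGoG

variable {G : Type*} [Group G] {VT : Type*}

/-- A choice of "edge subgraphs" `Γ(𝔢) ⊆ Γ` of the Cayley graph `Γ = Cay(G, S)`, one for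
each (unoriented) edge of the tree `T`, recorded by its vertex set `A a b ⊆ G`,
satisfying the properties of Lemma 3.2 (`AIS lem`).  Here `p` is the fixed base vertex of
`T` and `f_p(g) = g • p` is the orbit map. -/
structure EdgeSubgraphs (G : Type*) [Group G] (S : Set G) {VT : Type*} (T : SimpleGraph VT)
    [MulAction G VT] (p : VT) where
  /-- the vertex set of `Γ(𝔢)` for the edge `𝔢 = {a, b}` -/
  A : VT → VT → Set G
  /-- `Γ(𝔢)` only depends on the unoriented edge -/
  symm : ∀ a b : VT, A a b = A b a
  /-- (1) `Γ(𝔢)` is connected -/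
  conn : ∀ a b : VT, T.Adj a b → ∀ x ∈ A a b, ∀ y ∈ A a b,
    ∃ (n : ℕ) (c : ℕ → G), IsEdgePath (wdist S) n c ∧ c 0 = x ∧ c n = y ∧
      ∀ i ≤ n, c i ∈ A a b
  /-- (1) `Γ(𝔢)` is `G_𝔢`-invariant -/
  inva : ∀ a b : VT, T.Adj a b → ∀ g ∈ edgeStab G a b, ∀ x ∈ A a b, g * x ∈ A a b
  /-- (1) `Γ(𝔢)` is `G_𝔢`-cocompact -/
  cocpt : ∀ a b : VT, T.Adj a b →
    ∃ F : Finset G, ∀ x ∈ A a b, ∃ g ∈ edgeStab G a b, ∃ f ∈ F, x = g * f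
  /-- (2) equivariance: `Γ(g𝔢) = gΓ(𝔢)` -/
  equivariant : ∀ (g : G) (a b : VT), A (g • a) (g • b) = (fun x => g * x) '' A a b
  /-- (3) `Γ(𝔢)` contains every edge of `Γ` with one endpoint in `f_p⁻¹(𝔥)` and the other
  in `f_p⁻¹(𝔥*)` -/
  crossing : ∀ a b : VT, T.Adj a b → ∀ x y : G, wdist S x y = 1 →
    x • p ∈ halfspace T a b → y • p ∈ halfspace T b a → x ∈ A a b ∧ y ∈ A a b
  /-- (4) `N(f_p⁻¹(𝔥), r) ∩ N(f_p⁻¹(𝔥*), r) ⊆ N(Γ(𝔢), r)` -/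
  nbhd : ∀ a b : VT, T.Adj a b → ∀ r : ℝ, 0 ≤ r → ∀ x : G,
    (∃ y : G, y • p ∈ halfspace T a b ∧ wdist S x y ≤ r) →
    (∃ y : G, y • p ∈ halfspace T b a ∧ wdist S x y ≤ r) →
    ∃ z ∈ A a b, wdist S x z ≤ r
  /-- (5) each edge of `Γ` lies in `Γ(𝔢)` for only finitely many edges `𝔢` of `T` -/
  finmany : ∀ x y : G, wdist S x y = 1 →
    {e : VT × VT | T.Adj e.1 e.2 ∧ x ∈ A e.1 e.2 ∧ y ∈ A e.1 e.2}.Finite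

/-- The vertex set of `Γ(𝔥)` for the halfspace `𝔥` of the edge `{a,b}` containing `b`:
`f_p⁻¹(𝔥) ∖ Γ(𝔢)`. -/
def hsVerts (T : SimpleGraph VT) [MulAction G VT] (p : VT)
    (A : VT → VT → Set G) (a b : VT) : Set G :=
  {g : G | g • p ∈ halfspace T a b ∧ g ∉ A a b}

/-- `M(𝔥) ⊆ ∂_M G`: classes of rays eventually contained in `Γ(𝔥)`, for the halfspace `𝔥`
of the edge `{a,b}` containing `b`. -/
def Mset (S : Set G) (T : SimpleGraph VT) [MulAction G VT] (p : VT)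
    (A : VT → VT → Set G) (a b : VT) : Set (MorseBoundary G S) :=
  {ξ | ∃ γ : GRay G S, Quot.mk (grayRel S) γ = ξ ∧
        ∃ n₀ : ℕ, ∀ n ≥ n₀, γ.seq n ∈ hsVerts T p A a b}

end MorseGoG

namespace MorseGoG

/-! ### Word metrics -/

section Word

variable {G : Type*} [Group G] {S : Set G}

theorem exists_word (hS : Subgroup.closure S = ⊤) (g : G) :
    ∃ l : List G, (∀ x ∈ l, x ∈ S ∨ x⁻¹ ∈ S) ∧ l.prod = g := by
  have h : g ∈ Submonoid.closure (S ∪ S⁻¹) := by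
    rw [← Subgroup.closure_toSubmonoid, hS]
    trivial
  obtain ⟨l, h1, h2⟩ := Submonoid.exists_list_of_mem_closure h
  exact ⟨l, fun x hx => by simpa using h1 x hx, h2⟩

theorem wordLength_spec (hS : Subgroup.closure S = ⊤) (g : G) :
    ∃ l : List G, l.length = wordLength S g ∧ (∀ x ∈ l, x ∈ S ∨ x⁻¹ ∈ S) ∧ l.prod = g := by
  obtain ⟨l, h1, h2⟩ := exists_word hS g
  exact Nat.sInf_mem (s := {n : ℕ | ∃ l : List G, l.length = n ∧
    (∀ x ∈ l, x ∈ S ∨ x⁻¹ ∈ S) ∧ l.prod = g}) ⟨_, l, rfl, h1, h2⟩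

theorem wordLength_le {l : List G} (h : ∀ x ∈ l, x ∈ S ∨ x⁻¹ ∈ S) :
    wordLength S l.prod ≤ l.length :=
  Nat.sInf_le ⟨l, rfl, h, rfl⟩

theorem wordLength_one : wordLength S (1 : G) = 0 := by
  have := wordLength_le (S := S) (l := []) (by simp)
  simpa using this

theorem wordLength_mul_le (hS : Subgroup.closure S = ⊤) (g h : G) :
    wordLength S (g * h) ≤ wordLength S g + wordLength S h := by
  obtain ⟨l, h1, h2, h3⟩ := wordLength_spec hS g
  obtain ⟨l', h1', h2', h3'⟩ := wordLength_spec hS h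
  have := wordLength_le (S := S) (l := l ++ l') (by
    intro x hx
    rcases List.mem_append.1 hx with hx | hx
    exacts [h2 x hx, h2' x hx])
  simpa [h3, h3', h1, h1'] using this

theorem wordLength_inv_le (hS : Subgroup.closure S = ⊤) (g : G) :
    wordLength S g⁻¹ ≤ wordLength S g := by
  obtain ⟨l, h1, h2, h3⟩ := wordLength_spec hS g
  have := wordLength_le (S := S) (l := (l.map fun x => x⁻¹).reverse) (by
    intro x hx
    simp only [List.mem_reverse, List.mem_map] at hx
    obtain ⟨y, hy, rfl⟩ := hx
    rw [inv_inv]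
    exact (h2 y hy).symm)
  rw [← List.prod_inv_reverse, h3] at this
  simpa [h1] using this

theorem wordLength_inv (hS : Subgroup.closure S = ⊤) (g : G) :
    wordLength S g⁻¹ = wordLength S g :=
  le_antisymm (wordLength_inv_le hS g) (by simpa using wordLength_inv_le hS g⁻¹)

theorem wdist_left (k g h : G) : wdist S (k * g) (k * h) = wdist S g h := by
  unfold wdist
  congr 2
  group

theorem wdist_one_left (g : G) : wdist S 1 g = wordLength S g := by
  simp [wdist]

/-- A symmetric function with the triangle inequality that vanishes on the diagonal. -/
structure PM {X : Type*} (d : X → X → ℝ) : Prop where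
  self : ∀ x, d x x = 0
  comm : ∀ x y, d x y = d y x
  tri : ∀ x y z, d x z ≤ d x y + d y z

theorem PM.nonneg {X : Type*} {d : X → X → ℝ} (h : PM d) (x y : X) : 0 ≤ d x y := by
  have h1 := h.tri x y x
  rw [h.self, h.comm y x] at h1
  linarith

theorem wdist_pm (hS : Subgroup.closure S = ⊤) : PM (wdist S) where
  self x := by simp [wdist, wordLength_one]
  comm x y := by
    unfold wdist
    rw [← wordLength_inv hS]
    simp
  tri x y z := by
    unfold wdist
    have := wordLength_mul_le hS (x⁻¹ * y) (y⁻¹ * z)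
    have e : x⁻¹ * y * (y⁻¹ * z) = x⁻¹ * z := by group
    rw [e] at this
    exact_mod_cast this

theorem wordBall_finite (hS : Subgroup.closure S = ⊤) (hf : S.Finite) (n : ℕ) :
    {g : G | wordLength S g ≤ n}.Finite := by
  have hA : (S ∪ S⁻¹).Finite := hf.union hf.inv
  have h2 : {l : List G | (∀ x ∈ l, x ∈ S ∪ S⁻¹) ∧ l.length ≤ n}.Finite := by
    have : Finite (S ∪ S⁻¹ : Set G) := hA
    refine ((List.finite_length_le (S ∪ S⁻¹ : Set G) n).image (List.map Subtype.val)).subset ?_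
    rintro l ⟨h1, h2⟩
    refine ⟨l.attach.map fun x => ⟨x.1, h1 x.1 x.2⟩, ?_, ?_⟩
    · simpa using h2
    · simp
  refine (h2.image List.prod).subset ?_
  intro g hg
  obtain ⟨l, h1, h2, h3⟩ := wordLength_spec hS g
  exact ⟨l, ⟨fun x hx => by simpa using h2 x hx, by simpa [h1] using hg⟩, h3⟩

theorem ball_finite (hS : Subgroup.closure S = ⊤) (hf : S.Finite) (x : G) (r : ℝ) :
    {g : G | wdist S x g ≤ r}.Finite := by
  refine ((wordBall_finite hS hf ⌊r⌋₊).image (fun g => x * g)).subset ?_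
  intro g hg
  refine ⟨x⁻¹ * g, ?_, by simp⟩
  exact Nat.le_floor hg

theorem exists_geodSeg (hS : Subgroup.closure S = ⊤) (x y : G) :
    ∃ (n : ℕ) (c : ℕ → G), (n : ℝ) = wdist S x y ∧ IsGeodSeg (wdist S) n c ∧
      c 0 = x ∧ c n = y := by
  obtain ⟨l, h1, h2, h3⟩ := wordLength_spec hS (x⁻¹ * y)
  have key : ∀ i j : ℕ, i ≤ j → j ≤ l.length →
      wordLength S ((l.take i).prod⁻¹ * (l.take j).prod) ≤ j - i := by
    intro i j hij hj
    have e : l.take j = l.take i ++ (l.take j).drop i := by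
      have := List.take_append_drop i (l.take j)
      rw [List.take_take, min_eq_left hij] at this
      exact this.symm
    have e2 : (l.take i).prod⁻¹ * (l.take j).prod = ((l.take j).drop i).prod := by
      conv_lhs => rw [e]
      simp
    rw [e2]
    refine (wordLength_le ?_).trans ?_
    · intro x hx
      exact h2 x (List.mem_of_mem_take (List.mem_of_mem_drop hx))
    · simp
      omega
  have hpm := wdist_pm hS
  have up : ∀ i j : ℕ, i ≤ j → j ≤ l.length →
      wdist S (x * (l.take i).prod) (x * (l.take j).prod) ≤ (j : ℝ) - i := by
    intro i j hij hj
    rw [wdist_left]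
    have := key i j hij hj
    unfold wdist
    rw [← Nat.cast_sub hij]
    exact_mod_cast this
  have e0 : x * (l.take 0).prod = x := by simp
  have e1 : x * (l.take l.length).prod = y := by simp [h3]
  have eq : ∀ i j : ℕ, i ≤ j → j ≤ l.length →
      wdist S (x * (l.take i).prod) (x * (l.take j).prod) = (j : ℝ) - i := by
    intro i j hij hj
    refine le_antisymm (up i j hij hj) ?_
    have a1 := up 0 i (Nat.zero_le _) (hij.trans hj)
    have a2 := up j _ hj le_rfl
    have a3 : wdist S x y = l.length := by unfold wdist; rw [h1]
    rw [e0] at a1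
    rw [e1] at a2
    have t1 := hpm.tri x (x * (l.take i).prod) y
    have t2 := hpm.tri (x * (l.take i).prod) (x * (l.take j).prod) y
    push_cast at a1
    linarith
  refine ⟨l.length, fun i => x * (l.take i).prod, by unfold wdist; rw [h1], ?_, e0, e1⟩
  intro i hi j hj
  rcases le_total i j with h | h
  · rw [eq i j h hj, abs_sub_comm, abs_of_nonneg]
    have : (i : ℝ) ≤ j := by exact_mod_cast h
    linarith
  · rw [hpm.comm, eq j i h hi, abs_of_nonneg]
    have : (j : ℝ) ≤ i := by exact_mod_cast h
    linarith

end Word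
end MorseGoG

namespace MorseGoG

/-! ### Coarse geometry of Morse sets -/

section Coarse

variable {X : Type*} {d : X → X → ℝ}

/-- Discrete quasi-geodesic segments with `n` steps; the lower bound is written without
division, which only changes the constant. -/
def DQ (d : X → X → ℝ) (C : ℝ) (n : ℕ) (c : ℕ → X) : Prop :=
  1 ≤ C ∧ ∀ i ≤ n, ∀ j ≤ n,
    |(i : ℝ) - j| ≤ C * d (c i) (c j) + C ∧ d (c i) (c j) ≤ C * |(i : ℝ) - j| + C

theorem DQ.mono (hd : PM d) {C C' : ℝ} {n : ℕ} {c : ℕ → X} (h : DQ d C n c) (hC : C ≤ C') :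
    DQ d C' n c := by
  refine ⟨h.1.trans hC, fun i hi j hj => ?_⟩
  obtain ⟨h1, h2⟩ := h.2 i hi j hj
  have a1 := mul_le_mul_of_nonneg_right hC (hd.nonneg (c i) (c j))
  have a2 := mul_le_mul_of_nonneg_right hC (abs_nonneg ((i : ℝ) - j))
  constructor <;> linarith

theorem abs_floor_sub {s t : ℝ} (hs : 0 ≤ s) (ht : 0 ≤ t) :
    |s - t| ≤ |(⌊s⌋₊ : ℝ) - ⌊t⌋₊| + 1 ∧ |(⌊s⌋₊ : ℝ) - ⌊t⌋₊| ≤ |s - t| + 1 := by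
  have h1 := Nat.floor_le hs
  have h2 := Nat.floor_le ht
  have h3 := Nat.lt_floor_add_one s
  have h4 := Nat.lt_floor_add_one t
  constructor
  · rw [abs_le]
    constructor
    · linarith [neg_abs_le ((⌊s⌋₊ : ℝ) - ⌊t⌋₊)]
    · linarith [le_abs_self ((⌊s⌋₊ : ℝ) - ⌊t⌋₊)]
  · rw [abs_le]
    constructor
    · linarith [neg_abs_le (s - t)]
    · linarith [le_abs_self (s - t)]

theorem DQ.isQG (hd : PM d) {C : ℝ} {n : ℕ} {c : ℕ → X} (h : DQ d C n c) :
    IsQG d (3 * C) (Icc 0 (n : ℝ)) (fun t => c ⌊t⌋₊) := by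
  have hC := h.1
  refine ⟨by linarith, ?_⟩
  rintro s ⟨hs0, hs1⟩ t ⟨ht0, ht1⟩
  have hs : ⌊s⌋₊ ≤ n := Nat.floor_le_of_le hs1
  have ht : ⌊t⌋₊ ≤ n := Nat.floor_le_of_le ht1
  obtain ⟨h1, h2⟩ := h.2 _ hs _ ht
  obtain ⟨h3, h4⟩ := abs_floor_sub hs0 ht0
  have h0 := hd.nonneg (c ⌊s⌋₊) (c ⌊t⌋₊)
  constructor
  · rw [sub_le_iff_le_add, div_le_iff₀ (by linarith)]
    nlinarith
  · have := abs_nonneg (s - t)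
    nlinarith

theorem DQ.morse (hd : PM d) {N : ℝ → ℝ} {A : Set X} (hA : MorseSet d N A) {C : ℝ} {n : ℕ}
    {c : ℕ → X} (h : DQ d C n c) (h0 : c 0 ∈ A) (hn : c n ∈ A) :
    ∀ i ≤ n, InNbhd d A (N (3 * C)) (c i) := by
  intro i hi
  have := hA (3 * C) (by linarith [h.1]) 0 n (Nat.cast_nonneg n) _ (h.isQG hd)
    (by simpa using h0) (by simpa using hn) i
    ⟨Nat.cast_nonneg i, by exact_mod_cast hi⟩
  simpa using this

/-- Moving the endpoints of a quasi-geodesic by a bounded amount. -/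
theorem DQ.extend (hd : PM d) {C ρ : ℝ} {n : ℕ} {c : ℕ → X} (h : DQ d C n c) (hρ : 0 ≤ ρ)
    {x y : X} (hx : d x (c 0) ≤ ρ) (hy : d y (c n) ≤ ρ) :
    ∃ c' : ℕ → X, DQ d (C * (2 * ρ + 2)) (n + 1) c' ∧ c' 0 = x ∧ c' (n + 1) = y ∧
      (∀ i ≤ n + 1, ∃ j ≤ n, d (c' i) (c j) ≤ ρ) ∧
      ∀ j ≤ n, ∃ i ≤ n + 1, d (c j) (c' i) ≤ ρ := by
  have hC := h.1
  set c' : ℕ → X := fun i => if i = 0 then x else if i = n + 1 then y else c i with hc'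
  have key : ∀ i ≤ n + 1, d (c' i) (c (min i n)) ≤ ρ := by
    intro i hi
    by_cases h0 : i = 0
    · simpa [hc', h0] using hx
    · by_cases h1 : i = n + 1
      · simpa [hc', h1] using hy
      · have : min i n = i := by omega
        simpa [hc', h0, h1, this, hd.self] using hρ
  refine ⟨c', ⟨by nlinarith, ?_⟩, by simp [hc'], by simp [hc'], fun i hi =>
    ⟨min i n, min_le_right _ _, key i hi⟩, fun j hj => ?_⟩
  swap
  · have := key j (by omega)
    rw [min_eq_left hj, hd.comm] at this
    exact ⟨j, by omega, this⟩
  intro i hi j hj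
  obtain ⟨h1, h2⟩ := h.2 (min i n) (min_le_right _ _) (min j n) (min_le_right _ _)
  have k1 := key i hi
  have k2 := key j hj
  have t1 := hd.tri (c' i) (c (min i n)) (c' j)
  have t2 := hd.tri (c (min i n)) (c (min j n)) (c' j)
  have t3 := hd.tri (c (min i n)) (c' i) (c (min j n))
  have t4 := hd.tri (c' i) (c' j) (c (min j n))
  rw [hd.comm (c (min j n)) (c' j)] at t2
  rw [hd.comm (c (min i n)) (c' i)] at t3
  have h0 := hd.nonneg (c' i) (c' j)
  have a0 := abs_nonneg ((i : ℝ) - j)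
  have a1 : |(i : ℝ) - j| ≤ |((min i n : ℕ) : ℝ) - (min j n : ℕ)| + 1 := by
    have : |(i : ℤ) - j| ≤ |((min i n : ℕ) : ℤ) - (min j n : ℕ)| + 1 := by
      rcases le_total i n with hi' | hi' <;> rcases le_total j n with hj' | hj' <;>
        simp only [min_eq_left, min_eq_right, hi', hj', sub_self, abs_zero] <;>
        rcases abs_cases ((i : ℤ) - j) with h1 | h1 <;>
        rcases abs_cases ((i : ℤ) - n) with h2 | h2 <;>
        rcases abs_cases ((n : ℤ) - j) with h3 | h3 <;> omega
    exact_mod_cast this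
  have a2 : |((min i n : ℕ) : ℝ) - (min j n : ℕ)| ≤ |(i : ℝ) - j| := by
    have : |((min i n : ℕ) : ℤ) - (min j n : ℕ)| ≤ |(i : ℤ) - j| := by
      rcases le_total i n with hi' | hi' <;> rcases le_total j n with hj' | hj' <;>
        simp only [min_eq_left, min_eq_right, hi', hj', sub_self, abs_zero] <;>
        rcases abs_cases ((i : ℤ) - j) with h1 | h1 <;>
        rcases abs_cases ((i : ℤ) - n) with h2 | h2 <;>
        rcases abs_cases ((n : ℤ) - j) with h3 | h3 <;> omega
    exact_mod_cast this
  have b1 := mul_le_mul_of_nonneg_left a2 (by linarith : 0 ≤ C)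
  have b2 : C * d (c (min i n)) (c (min j n)) ≤ C * (d (c' i) (c' j) + 2 * ρ) :=
    mul_le_mul_of_nonneg_left (by linarith) (by linarith)
  have b3 : 0 ≤ C * ρ := by positivity
  have b5 : 0 ≤ (C - 1) * ρ := mul_nonneg (by linarith) hρ
  have b6 : 0 ≤ C * d (c' i) (c' j) := by positivity
  have b7 : 0 ≤ C * |(i : ℝ) - j| := by positivity
  have b8 : 0 ≤ C * ρ * d (c' i) (c' j) := by positivity
  have b9 : 0 ≤ C * ρ * |(i : ℝ) - j| := by positivity
  constructor <;> linarith

theorem IsGeodSeg.dq {n : ℕ} {c : ℕ → X} (h : IsGeodSeg d n c) : DQ d 1 n c := by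
  refine ⟨le_rfl, fun i hi j hj => ?_⟩
  rw [h i hi j hj]
  constructor <;> linarith

/-- Coarse connectedness: a path with bounded jumps that follows the ray `γ` passes close to
every point of `γ` between its ends. -/
theorem coarse_connected (hd : PM d) {γ : ℕ → X} (hγ : IsGeodSeq d γ) {c : ℕ → X} {n : ℕ}
    {B r : ℝ} (hB : ∀ l < n, d (c l) (c (l + 1)) ≤ B) {f : ℕ → ℕ}
    (hf : ∀ l ≤ n, d (c l) (γ (f l)) ≤ r) {k : ℕ} (h0 : f 0 ≤ k) (hn : k ≤ f n) :
    ∃ l ≤ n, d (γ k) (c l) ≤ |B| + 3 * r := by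
  classical
  have hr : 0 ≤ r := (hd.nonneg _ _).trans (hf 0 (Nat.zero_le _))
  have hex : ∃ l, k ≤ f l := ⟨n, hn⟩
  have hle : Nat.find hex ≤ n := Nat.find_min' hex hn
  have hsp := Nat.find_spec hex
  refine ⟨Nat.find hex, hle, ?_⟩
  have t := hd.tri (γ k) (γ (f (Nat.find hex))) (c (Nat.find hex))
  rw [hd.comm (γ (f (Nat.find hex)))] at t
  have h1 := hf _ hle
  have h2 := hγ k (f (Nat.find hex))
  have hkc : (k : ℝ) ≤ f (Nat.find hex) := by exact_mod_cast hsp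
  rw [abs_sub_comm, abs_of_nonneg (by linarith)] at h2
  rcases hl : Nat.find hex with _ | l
  · rw [hl] at h1 h2 t hkc
    have : f 0 = k := le_antisymm h0 (by rwa [hl] at hsp)
    rw [this] at h2 t h1
    linarith [abs_nonneg B]
  · have hlt : f l < k := by
      have := Nat.find_min hex (m := l) (by omega)
      omega
    rw [hl] at h1 h2 t hkc hle
    have h3 := hf l (by omega)
    have h4 := hB l (by omega)
    have h5 := hγ (f l) (f (l + 1))
    have hlc : (f l : ℝ) ≤ k := by exact_mod_cast hlt.le
    rw [abs_sub_comm, abs_of_nonneg (by linarith)] at h5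
    have t2 := hd.tri (γ (f l)) (c l) (γ (f (l + 1)))
    have t3 := hd.tri (c l) (c (l + 1)) (γ (f (l + 1)))
    rw [hd.comm (γ (f l)) (c l)] at t2
    linarith [le_abs_self B]

theorem DQ.step {C : ℝ} {n : ℕ} {c : ℕ → X} (h : DQ d C n c) : ∀ l < n,
    d (c l) (c (l + 1)) ≤ 2 * C := by
  intro l hl
  have := (h.2 l hl.le (l + 1) hl).2
  have e : |(l : ℝ) - (l + 1 : ℕ)| = 1 := by
    push_cast
    rw [show (l : ℝ) - (l + 1) = -1 by ring]
    simp
  rw [e] at this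
  linarith

/-- A Morse geodesic ray stays close to any quasi-geodesic joining two of its points. -/
theorem DQ.near_ray (hd : PM d) {N : ℝ → ℝ} {γ : ℕ → X} (hγ : IsGeodSeq d γ)
    (hA : MorseSet d N (range γ)) {C : ℝ} {n : ℕ}
    {c : ℕ → X} (h : DQ d C n c) {i j k : ℕ} (h0 : c 0 = γ i) (hn : c n = γ j)
    (hik : i ≤ k) (hkj : k ≤ j) :
    ∃ l ≤ n, d (γ k) (c l) ≤ 2 * C + 3 * N (3 * C) := by
  classical
  have hm := h.morse hd hA ⟨i, h0.symm⟩ ⟨j, hn.symm⟩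
  have hC := h.1
  have hN : 0 ≤ N (3 * C) := by
    obtain ⟨a, _, ha⟩ := hm 0 (Nat.zero_le _)
    exact (hd.nonneg _ _).trans ha
  by_cases hn0 : n = 0
  · subst hn0
    refine ⟨0, le_rfl, ?_⟩
    have e : γ i = γ j := h0.symm.trans hn
    have h1 := hγ i j
    rw [e, hd.self] at h1
    have : (i : ℝ) = j := by linarith [abs_eq_zero.1 h1.symm]
    have hij : i = j := by exact_mod_cast this
    have : k = i := by omega
    rw [this, h0, hd.self]
    linarith
  have hex : ∀ l, ∃ m, l ≤ n → d (c l) (γ m) ≤ N (3 * C) ∧ (l = 0 → m = i) ∧ (l = n → m = j) := by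
    intro l
    by_cases hl : l = 0
    · exact ⟨i, fun _ => ⟨by rw [hl, h0, hd.self]; exact hN, fun _ => rfl, fun h => by omega⟩⟩
    by_cases hl' : l = n
    · exact ⟨j, fun _ => ⟨by rw [hl', hn, hd.self]; exact hN, fun h => by omega, fun _ => rfl⟩⟩
    by_cases hle : l ≤ n
    · obtain ⟨_, ⟨m, rfl⟩, hm'⟩ := hm l hle
      exact ⟨m, fun _ => ⟨hm', fun h => absurd h hl, fun h => absurd h hl'⟩⟩
    · exact ⟨0, fun h => absurd h hle⟩
  choose f hf using hex
  obtain ⟨l, hl, hl'⟩ := coarse_connected (k := k) hd hγ h.step (fun l hl => (hf l hl).1)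
    (by rw [(hf 0 (Nat.zero_le _)).2.1 rfl]; exact hik)
    (by rw [(hf n le_rfl).2.2 rfl]; exact hkj)
  exact ⟨l, hl, by rwa [abs_of_nonneg (by linarith)] at hl'⟩

/-- The Morse property passes along quasi-isometric embeddings to sets at finite Hausdorff
distance, with a gauge depending only on the constants. -/
theorem MorseSet.pull {Z : Type*} {dZ : Z → Z → ℝ} (hd : PM d) (hdZ : PM dZ) {φ : Z → X}
    {C₀ r : ℝ} (hC₀ : 1 ≤ C₀) (hr : 0 ≤ r)
    (h1 : ∀ z z', dZ z z' ≤ C₀ * d (φ z) (φ z') + C₀)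
    (h2 : ∀ z z', d (φ z) (φ z') ≤ C₀ * dZ z z' + C₀)
    {N : ℝ → ℝ} {A : Set X} {B : Set Z} (hA : MorseSet d N A)
    (hBA : ∀ b ∈ B, InNbhd d A r (φ b)) (hAB : ∀ a ∈ A, ∃ b ∈ B, d a (φ b) ≤ r) :
    MorseSet dZ (fun C => C₀ * (N (C * C₀ + C₀ + 2 * r + C) + r) + C₀) B := by
  intro C hC a b hab α hα ha hb t ht
  obtain ⟨x, hx, hxr⟩ := hBA _ ha
  obtain ⟨y, hy, hyr⟩ := hBA _ hb
  have hCC : 1 ≤ C * C₀ := one_le_mul_of_one_le_of_one_le hC hC₀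
  set C₁ := C * C₀ + C₀ + 2 * r + C with hC₁
  have hC₁1 : 1 ≤ C₁ := by linarith
  -- a constant path gives nonnegativity of the gauge
  have hN : 0 ≤ N C₁ := by
    obtain ⟨z, _, hz⟩ := hA C₁ hC₁1 0 0 le_rfl (fun _ => x)
      ⟨hC₁1, fun s hs t ht => by
        have e1 : s = 0 := le_antisymm hs.2 hs.1
        have e2 : t = 0 := le_antisymm ht.2 ht.1
        subst e1; subst e2
        simp only [hd.self, sub_self, abs_zero]
        constructor <;> simp <;> linarith⟩ hx hx 0 ⟨le_rfl, le_rfl⟩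
    exact (hd.nonneg _ _).trans hz
  have triv : ∀ z ∈ B, InNbhd dZ B (C₀ * (N C₁ + r) + C₀) z := fun z hz =>
    ⟨z, hz, by rw [hdZ.self]; positivity⟩
  rcases eq_or_lt_of_le ht.1 with hta | hta
  · rw [← hta]; exact triv _ ha
  rcases eq_or_lt_of_le ht.2 with htb | htb
  · rw [htb]; exact triv _ hb
  -- replace the endpoints of the image path by nearby points of `A`
  set α' : ℝ → X := fun s => if s = a then x else if s = b then y else φ (α s) with hα'
  have near : ∀ s, d (α' s) (φ (α s)) ≤ r := by
    intro s
    by_cases hsa : s = a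
    · simpa [hα', hsa, hd.comm x] using hxr
    · by_cases hsb : s = b
      · have : b ≠ a := hsb ▸ hsa
        simpa [hα', hsb, this, hd.comm y] using hyr
      · simpa [hα', hsa, hsb, hd.self] using hr
  have hqg : IsQG d C₁ (Icc a b) α' := by
    refine ⟨hC₁1, fun s hs u hu => ?_⟩
    obtain ⟨q1, q2⟩ := hα.2 s hs u hu
    have n1 := near s
    have n2 := near u
    have t1 := hd.tri (α' s) (φ (α s)) (α' u)
    have t2 := hd.tri (φ (α s)) (φ (α u)) (α' u)
    have t3 := hd.tri (φ (α s)) (α' s) (φ (α u))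
    have t4 := hd.tri (α' s) (α' u) (φ (α u))
    rw [hd.comm (φ (α u)) (α' u)] at t2
    rw [hd.comm (φ (α s)) (α' s)] at t3
    have p1 := h1 (α s) (α u)
    have p2 := h2 (α s) (α u)
    have a0 := abs_nonneg (s - u)
    have d0 := hd.nonneg (α' s) (α' u)
    constructor
    · rw [sub_le_iff_le_add, div_le_iff₀ (by linarith)] at q1 ⊢
      have e1 : C * dZ (α s) (α u) ≤ C * (C₀ * (d (α' s) (α' u) + 2 * r) + C₀) := by
        refine mul_le_mul_of_nonneg_left (p1.trans ?_) (by linarith)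
        have := mul_le_mul_of_nonneg_left
          (by linarith : d (φ (α s)) (φ (α u)) ≤ d (α' s) (α' u) + 2 * r)
          (by linarith : 0 ≤ C₀)
        linarith
      have e2 : C * C₀ * d (α' s) (α' u) ≤ C₁ * d (α' s) (α' u) :=
        mul_le_mul_of_nonneg_right (by linarith) d0
      have e3 : C * C₀ * (2 * r) ≤ C₁ * (2 * r) :=
        mul_le_mul_of_nonneg_right (by linarith) (by linarith)
      have e4 : C * C₀ ≤ C₁ * C₀ := mul_le_mul_of_nonneg_right (by nlinarith) (by linarith)
      have e5 : C * C ≤ C₁ * C := mul_le_mul_of_nonneg_right (by nlinarith) (by linarith)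
      have e6 : 0 ≤ C₁ * (C * C₀) := by positivity
      have e7 : C₁ * C₁ = C₁ * (C * C₀) + C₁ * C₀ + C₁ * (2 * r) + C₁ * C := by
        rw [hC₁]; ring
      nlinarith
    · have e1 : C₀ * dZ (α s) (α u) ≤ C₀ * (C * |s - u| + C) :=
        mul_le_mul_of_nonneg_left q2 (by linarith)
      have e2 : C * C₀ * |s - u| ≤ C₁ * |s - u| :=
        mul_le_mul_of_nonneg_right (by linarith) a0
      linarith
  have hba : b ≠ a := by linarith [hta.trans htb] |> fun h : a < b => h.ne'
  obtain ⟨z, hz, hzr⟩ := hA C₁ hC₁1 a b hab α' hqg (by simpa [hα'] using hx)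
    (by simpa [hα', hba] using hy) t ht
  have e : α' t = φ (α t) := by simp [hα', hta.ne', htb.ne]
  rw [e] at hzr
  obtain ⟨w, hw, hwr⟩ := hAB z hz
  refine ⟨w, hw, (h1 _ _).trans ?_⟩
  have := hd.tri (φ (α t)) z (φ w)
  have := mul_le_mul_of_nonneg_left
    (by linarith : d (φ (α t)) (φ w) ≤ N C₁ + r) (by linarith : 0 ≤ C₀)
  linarith

theorem BddHD.refl (hd : PM d) (A : Set X) : BddHD d A A :=
  ⟨0, fun a ha => ⟨a, ha, (hd.self a).le⟩, fun a ha => ⟨a, ha, (hd.self a).le⟩⟩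

theorem BddHD.symm {A B : Set X} (h : BddHD d A B) : BddHD d B A :=
  let ⟨r, h1, h2⟩ := h
  ⟨r, h2, h1⟩

theorem BddHD.trans (hd : PM d) {A B C : Set X} (h : BddHD d A B) (h' : BddHD d B C) :
    BddHD d A C := by
  obtain ⟨r, h1, h2⟩ := h
  obtain ⟨s, h3, h4⟩ := h'
  refine ⟨r + s, fun a ha => ?_, fun c hc => ?_⟩
  · obtain ⟨b, hb, hbr⟩ := h1 a ha
    obtain ⟨c, hc, hcr⟩ := h3 b hb
    exact ⟨c, hc, (hd.tri a b c).trans (by linarith)⟩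
  · obtain ⟨b, hb, hbr⟩ := h4 c hc
    obtain ⟨a, ha, har⟩ := h2 b hb
    exact ⟨a, ha, (hd.tri c b a).trans (by linarith)⟩

theorem BddHD.isMorse (hd : PM d) {A B : Set X} (h : BddHD d A B) (hA : IsMorse d A) :
    IsMorse d B := by
  obtain ⟨r, h1, h2⟩ := h
  obtain ⟨N, hN⟩ := hA
  refine ⟨_, hN.pull (φ := id) (C₀ := 1) (r := max r 0) hd hd le_rfl (le_max_right _ _)
    (fun _ _ => by simp) (fun _ _ => by simp) ?_ ?_⟩
  · intro b hb
    obtain ⟨a, ha, har⟩ := h2 b hb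
    exact ⟨a, ha, har.trans (le_max_left _ _)⟩
  · intro a ha
    obtain ⟨b, hb, hbr⟩ := h1 a ha
    exact ⟨b, hb, hbr.trans (le_max_left _ _)⟩

end Coarse
end MorseGoG

namespace MorseGoG

/-! ### Limits, transfer to subgroups, and fellow travelling of Morse rays -/

section Rays

variable {X : Type*} {d : X → X → ℝ}

/-- Diagonal extraction: a sequence of sequences with values in finite sets has a pointwise
limit along a nonprincipal ultrafilter. -/
theorem ultralimit {β : ℕ → ℕ → X} {F : ℕ → Set X} (hF : ∀ k, (F k).Finite)
    (h : ∀ k, ∀ᶠ m in (hyperfilter ℕ : Filter ℕ), β m k ∈ F k) :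
    ∃ b : ℕ → X, ∀ K, ∀ᶠ m in (hyperfilter ℕ : Filter ℕ), ∀ k ≤ K, β m k = b k := by
  have : ∀ k, ∃ g, ∀ᶠ m in (hyperfilter ℕ : Filter ℕ), β m k = g := by
    intro k
    have h1 : ∀ᶠ m in (hyperfilter ℕ : Filter ℕ), ∃ g ∈ F k, β m k = g := by
      filter_upwards [h k] with m hm
      exact ⟨_, hm, rfl⟩
    obtain ⟨g, _, hg⟩ := (Ultrafilter.eventually_exists_mem_iff (hF k)).1 h1
    exact ⟨g, hg⟩
  choose b hb using this
  refine ⟨b, fun K => ?_⟩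
  exact (eventually_all_finite (finite_le_nat K)).2 fun k _ => hb k

theorem limit_morse (hd : PM d) {β : ℕ → ℕ → X} {b : ℕ → X}
    (hb : ∀ K, ∀ᶠ m in (hyperfilter ℕ : Filter ℕ), ∀ k ≤ K, β m k = b k)
    (hg : ∀ m, IsGeodSeq d (β m)) {N : ℝ → ℝ} (hN : ∀ m, MorseSet d N (range (β m))) :
    MorseSet d N (range b) := by
  rintro C hC s t hst α hα ⟨i, hi⟩ ⟨j, hj⟩ u hu
  obtain ⟨m, hm⟩ := (hb (max (max i j) ⌈d (b 0) (α u) + N C⌉₊)).exists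
  obtain ⟨_, ⟨l, rfl⟩, hl⟩ := hN m C hC s t hst α hα
    ⟨i, by rw [hm i (le_max_of_le_left (le_max_left _ _)), hi]⟩
    ⟨j, by rw [hm j (le_max_of_le_left (le_max_right _ _)), hj]⟩ u hu
  have h1 := hg m 0 l
  have h2 := hd.tri (β m 0) (α u) (β m l)
  rw [h1, hm 0 (Nat.zero_le _)] at h2
  have h3 : (l : ℝ) ≤ d (b 0) (α u) + N C := by
    have := neg_abs_le ((0 : ℕ) - (l : ℝ))
    push_cast at *
    linarith
  have h4 : l ≤ ⌈d (b 0) (α u) + N C⌉₊ := by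
    exact_mod_cast h3.trans (Nat.le_ceil _)
  exact ⟨b l, ⟨l, rfl⟩, by rwa [hm l (le_max_of_le_right h4)] at hl⟩

theorem limit_geod {β : ℕ → ℕ → X} {b : ℕ → X}
    (hb : ∀ K, ∀ᶠ m in (hyperfilter ℕ : Filter ℕ), ∀ k ≤ K, β m k = b k)
    (hg : ∀ K, ∀ᶠ m in (hyperfilter ℕ : Filter ℕ), IsGeodSeg d K (β m)) :
    IsGeodSeq d b := by
  intro i j
  obtain ⟨m, hm, hm'⟩ := ((hb (max i j)).and (hg (max i j))).exists
  rw [← hm i (le_max_left _ _), ← hm j (le_max_right _ _)]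
  exact hm' i (le_max_left _ _) j (le_max_right _ _)

theorem DQ.reverse {C : ℝ} {n : ℕ} {c : ℕ → X} (h : DQ d C n c) :
    DQ d C n (fun i => c (n - i)) := by
  refine ⟨h.1, fun i hi j hj => ?_⟩
  have := h.2 (n - i) (Nat.sub_le _ _) (n - j) (Nat.sub_le _ _)
  rw [Nat.cast_sub hi, Nat.cast_sub hj] at this
  have e : |(n : ℝ) - i - (n - j)| = |(i : ℝ) - j| := by
    rw [← abs_neg]
    congr 1
    ring
  rwa [e] at this

/-- A geodesic from `g 0` to a nearest point of a quasi-geodesic, continued along the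
quasi-geodesic, is again a quasi-geodesic. -/
theorem DQ.concat (hd : PM d) {C : ℝ} {n : ℕ} {c : ℕ → X} (h : DQ d C n c) {L : ℕ} {g : ℕ → X}
    (hg : IsGeodSeg d L g) {q : ℕ} (hq : q ≤ n) (hgq : g L = c q)
    (hmin : ∀ i ≤ n, (L : ℝ) ≤ d (g 0) (c i)) :
    DQ d (2 * C + 1) (L + (n - q)) (fun i => if i ≤ L then g i else c (q + (i - L))) := by
  have hC := h.1
  set e : ℕ → X := fun i => if i ≤ L then g i else c (q + (i - L)) with he
  have key : ∀ i ≤ L + (n - q), ∀ j ≤ L + (n - q), i ≤ j →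
      |(i : ℝ) - j| ≤ (2 * C + 1) * d (e i) (e j) + (2 * C + 1) ∧
      d (e i) (e j) ≤ (2 * C + 1) * |(i : ℝ) - j| + (2 * C + 1) := by
    intro i hi j hj hij
    have d0 := hd.nonneg (e i) (e j)
    have a0 := abs_nonneg ((i : ℝ) - j)
    by_cases hjL : j ≤ L
    · have hiL : i ≤ L := hij.trans hjL
      have e1 : d (e i) (e j) = |(i : ℝ) - j| := by
        simp only [he, hjL, hiL, if_true]
        exact hg i hiL j hjL
      rw [e1]
      constructor <;> nlinarith
    · push Not at hjL
      have ej : e j = c (q + (j - L)) := by simp [he, not_le.2 hjL]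
      by_cases hiL : i ≤ L
      · have ei : e i = g i := by simp [he, hiL]
        rw [ei, ej] at *
        set w := c (q + (j - L)) with hw
        have h1 := hg 0 (Nat.zero_le _) i hiL
        have h2 := hg i hiL L le_rfl
        obtain ⟨h3, h4⟩ := h.2 q hq (q + (j - L)) (by omega)
        have h5 := hmin (q + (j - L)) (by omega)
        rw [← hw] at h3 h4 h5
        have t1 := hd.tri (g 0) (g i) w
        have t2 := hd.tri (c q) (g i) w
        have t3 := hd.tri (g i) (c q) w
        rw [hd.comm (c q) (g i)] at t2
        rw [hgq] at h2
        have r1 : (i : ℝ) ≤ L := by exact_mod_cast hiL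
        have r2 : (L : ℝ) < j := by exact_mod_cast hjL
        have r3 : ((q + (j - L) : ℕ) : ℝ) = q + (j - L) := by
          push_cast [Nat.cast_sub hjL.le]
          ring
        rw [r3] at h3 h4
        rw [show (q : ℝ) - (q + (j - L)) = -((j : ℝ) - L) by ring, abs_neg,
          abs_of_nonneg (by linarith)] at h3 h4
        rw [abs_sub_comm, abs_of_nonneg (by linarith)] at h2
        rw [abs_sub_comm, abs_of_nonneg (by simp)] at h1
        rw [abs_sub_comm, abs_of_nonneg (by linarith)]
        push_cast at h1
        have m1 : C * d (c q) w ≤ C * (2 * d (g i) w) :=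
          mul_le_mul_of_nonneg_left (by linarith) (by linarith)
        constructor
        · linarith
        · nlinarith
      · push Not at hiL
        have ei : e i = c (q + (i - L)) := by simp [he, not_le.2 hiL]
        have h3 := h.2 (q + (i - L)) (by omega) (q + (j - L)) (by omega)
        have r3 : ((q + (j - L) : ℕ) : ℝ) = q + (j - L) := by
          push_cast [Nat.cast_sub hjL.le]
          ring
        have r4 : ((q + (i - L) : ℕ) : ℝ) = q + (i - L) := by
          push_cast [Nat.cast_sub hiL.le]
          ring
        rw [r3, r4, show (q : ℝ) + (i - L) - (q + (j - L)) = (i : ℝ) - j by ring, ← ei, ← ej] at h3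
        obtain ⟨h3, h4⟩ := h3
        constructor <;> nlinarith
  refine ⟨by linarith, fun i hi j hj => ?_⟩
  rcases le_total i j with hij | hij
  · exact key i hi j hj hij
  · have := key j hj i hi hij
    rwa [abs_sub_comm, hd.comm] at this

/-- A Morse ray fellow-travels the geodesic from its origin to a nearest point of any
quasi-geodesic that ends on the ray. -/
theorem DQ.geod_near (hd : PM d) {N : ℝ → ℝ} {γ : ℕ → X} (hγ : IsGeodSeq d γ)
    (hA : MorseSet d N (range γ)) {C : ℝ} {n : ℕ} {c : ℕ → X} (h : DQ d C n c) {L : ℕ}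
    {g : ℕ → X} (hg : IsGeodSeg d L g) {q : ℕ} (hq : q ≤ n) (hgq : g L = c q)
    (hmin : ∀ i ≤ n, (L : ℝ) ≤ d (g 0) (c i)) (h0 : g 0 = γ 0) (hn : c n ∈ range γ) :
    ∀ k ≤ L, d (γ k) (g k) ≤ 2 * N (3 * (2 * C + 1)) := by
  intro k hk
  have hc := h.concat hd hg hq hgq hmin
  obtain ⟨_, ⟨m, rfl⟩, hm⟩ := hc.morse hd hA (by simp [h0]) (by
    by_cases hqn : n ≤ q
    · have : q = n := le_antisymm hq hqn
      subst this
      simpa [hgq] using hn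
    · have e' : ¬ (L + (n - q) ≤ L) := by omega
      simp only [if_neg e', show q + (L + (n - q) - L) = n by omega]
      exact hn) k (by omega)
  simp only [hk, if_true] at hm
  have t1 := hd.tri (γ 0) (γ m) (g k)
  have t2 := hd.tri (γ 0) (g k) (γ m)
  have t3 := hd.tri (γ k) (γ m) (g k)
  have e1 := hγ 0 m
  have e2 := hg 0 (Nat.zero_le _) k hk
  have e3 := hγ k m
  rw [h0] at e2
  rw [abs_sub_comm, abs_of_nonneg (by simp)] at e1 e2
  rw [hd.comm (γ m) (g k)] at t1 t3
  push_cast at e1 e2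
  have e4 : |(k : ℝ) - m| ≤ N (3 * (2 * C + 1)) := by
    rw [abs_le]
    constructor <;> linarith
  linarith

end Rays

section Groups

variable {G : Type*} [Group G] {S : Set G}

/-- Two Morse rays whose points are joined by uniform quasi-geodesics going arbitrarily far from
the origin are asymptotic: the geodesic from the origin to a nearest point of such a
quasi-geodesic fellow-travels both rays. -/
theorem fellow_travel (hS : Subgroup.closure S = ⊤) {N N' : ℝ → ℝ} {γ γ' : ℕ → G}
    (hγ : IsGeodSeq (wdist S) γ) (hγ' : IsGeodSeq (wdist S) γ') (h0 : γ 0 = 1) (h0' : γ' 0 = 1)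
    (hN : MorseSet (wdist S) N (range γ)) (hN' : MorseSet (wdist S) N' (range γ')) {C : ℝ}
    (h : ∀ R : ℝ, ∃ (n : ℕ) (c : ℕ → G), DQ (wdist S) C n c ∧ c 0 ∈ range γ ∧ c n ∈ range γ' ∧
      ∀ i ≤ n, R ≤ wdist S 1 (c i)) :
    BddHD (wdist S) (range γ) (range γ') := by
  have hd := wdist_pm hS
  set r := 2 * N (3 * (2 * C + 1)) + 2 * N' (3 * (2 * C + 1)) with hr
  have key : ∀ k, wdist S (γ k) (γ' k) ≤ r := by
    intro k
    obtain ⟨n, c, hc, hc0, hcn, hR⟩ := h k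
    obtain ⟨q, hq, hqmin⟩ := Finset.exists_min_image (Finset.range (n + 1))
      (fun i => wdist S 1 (c i)) ⟨0, by simp⟩
    have hq' : q ≤ n := by simpa [Nat.lt_succ_iff] using hq
    obtain ⟨L, g, hL, hg, hg0, hgL⟩ := exists_geodSeg hS 1 (c q)
    have hkL : k ≤ L := by
      have := hR q hq'
      rw [← hL] at this
      exact_mod_cast this
    have hmin : ∀ i ≤ n, (L : ℝ) ≤ wdist S (g 0) (c i) := by
      intro i hi
      rw [hg0, hL]
      exact hqmin i (by simpa [Nat.lt_succ_iff] using hi)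
    have a1 := hc.geod_near hd hγ' hN' hg hq' hgL hmin (by rw [hg0, h0']) hcn k hkL
    have a2 := hc.reverse.geod_near hd hγ hN hg (q := n - q) (Nat.sub_le _ _)
      (by rw [hgL]; congr 1; omega) (fun i hi => hmin _ (Nat.sub_le _ _)) (by rw [hg0, h0])
      (by simpa using hc0) k hkL
    have t := hd.tri (γ k) (g k) (γ' k)
    rw [hd.comm (g k) (γ' k)] at t
    linarith
  refine ⟨r, ?_, ?_⟩
  · rintro _ ⟨k, rfl⟩
    exact ⟨γ' k, ⟨k, rfl⟩, key k⟩
  · rintro _ ⟨k, rfl⟩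
    exact ⟨γ k, ⟨k, rfl⟩, by rw [hd.comm]; exact key k⟩

theorem quot_eq_iff (hS : Subgroup.closure S = ⊤) {γ γ' : GRay G S} :
    (Quot.mk (grayRel S) γ : MorseBoundary G S) = Quot.mk (grayRel S) γ' ↔ grayRel S γ γ' := by
  have hd := wdist_pm hS
  have he : Equivalence (grayRel S) :=
    ⟨fun x => BddHD.refl hd _, fun h => BddHD.symm h, fun h h' => BddHD.trans hd h h'⟩
  exact ⟨fun h => he.eqvGen_iff.1 (Quot.eqvGen_exact h), fun h => Quot.sound h⟩

/-- The inclusion of `H` in `G` is bi-Lipschitz up to an additive constant, for the word metrics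
given by `TH` and `S`: undistortedness with an explicit constant `C`. -/
def QIncl (S : Set G) (H : Subgroup G) (TH : Set H) (C : ℝ) : Prop :=
  1 ≤ C ∧ ∀ h h' : H, wdist TH h h' ≤ C * wdist S (h : G) (h' : G) + C ∧
    wdist S (h : G) (h' : G) ≤ C * wdist TH h h' + C

theorem QIncl.dq {H : Subgroup G} {TH : Set H} {C : ℝ} (h : QIncl S H TH C) {n : ℕ} {c : ℕ → H}
    (hc : IsGeodSeg (wdist TH) n c) : DQ (wdist S) C n (fun i => (c i : G)) := by
  refine ⟨h.1, fun i hi j hj => ?_⟩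
  rw [← hc i hi j hj]
  exact h.2 _ _

/-- A Morse geodesic ray of `G` that stays close to an undistorted subgroup `H` is at bounded
distance from a Morse geodesic ray of `H`, uniformly in the ray. -/
theorem transfer (hS : Subgroup.closure S = ⊤) {H : Subgroup G} {TH : Set H}
    (hT : Subgroup.closure TH = ⊤) (hTf : TH.Finite) {C₀ : ℝ} (hq : QIncl S H TH C₀)
    (N : ℝ → ℝ) {D : ℝ} (hD : 0 ≤ D) :
    ∃ (N' : ℝ → ℝ) (D' : ℝ), ∀ γ : ℕ → G, γ 0 = 1 → IsGeodSeq (wdist S) γ →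
      MorseSet (wdist S) N (range γ) → (∀ n, ∃ h ∈ H, wdist S (γ n) h ≤ D) →
      ∃ β : ℕ → H, β 0 = 1 ∧ IsGeodSeq (wdist TH) β ∧ MorseSet (wdist TH) N' (range β) ∧
        (∀ n, ∃ m, wdist S (β n) (γ m) ≤ D') ∧ (∀ m, ∃ n, wdist S (γ m) (β n) ≤ D') := by
  have hd := wdist_pm hS
  have hdH := wdist_pm hT
  have hC₀ := hq.1
  set C₁ := C₀ * (2 * D + 2) with hC₁
  set r := max (N (3 * C₁)) 0 + D with hr
  have hr0 : 0 ≤ r := add_nonneg (le_max_right _ _) hD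
  set D' := |2 * C₀| + 3 * r with hD'
  have hD'0 : 0 ≤ D' := by positivity
  refine ⟨fun C => C₀ * (N (C * C₀ + C₀ + 2 * D' + C) + D') + C₀, D', fun γ h0 hγ hN hH => ?_⟩
  · choose h hhH hhD using hH
    have := fun n => exists_geodSeg hT 1 (⟨h n, hhH n⟩ : H)
    choose len c hlen hc hc0 hcn using this
    have hnear : ∀ n, ∀ i ≤ len n, ∃ m, wdist S (c n i) (γ m) ≤ r := by
      intro n i hi
      obtain ⟨c', hc', hc'0, hc'n, -, hcc'⟩ := (hq.dq (hc n)).extend hd hD (x := γ 0) (y := γ n)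
        (by simp [hc0, h0, hd.self, hD]) (by simpa [hcn] using hhD n)
      obtain ⟨j, hj, hij⟩ := hcc' i hi
      obtain ⟨_, ⟨m, rfl⟩, hm⟩ := hc'.morse hd hN ⟨0, hc'0.symm⟩ ⟨n, hc'n.symm⟩ j hj
      refine ⟨m, (hd.tri _ (c' j) _).trans ?_⟩
      have := le_max_left (N (3 * C₁)) 0
      rw [hr]
      linarith
    have hlenbig : ∀ K : ℕ, ∀ᶠ n in (hyperfilter ℕ : Filter ℕ), K ≤ len n := by
      intro K
      have : ∀ᶠ n : ℕ in atTop, C₀ * K + C₀ + D < n :=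
        tendsto_natCast_atTop_atTop.eventually_gt_atTop _
      filter_upwards [this.filter_mono Nat.hyperfilter_le_atTop] with n hn
      by_contra hlt
      push Not at hlt
      have hlt' : (len n : ℝ) ≤ K := by exact_mod_cast hlt.le
      have e1 := hγ 0 n
      rw [abs_sub_comm, abs_of_nonneg (by simp), h0] at e1
      push_cast at e1
      have e2 := (hq.2 1 ⟨h n, hhH n⟩).2
      rw [← hlen n] at e2
      have t := hd.tri 1 (h n) (γ n)
      rw [hd.comm (h n)] at t
      have := hhD n
      have m := mul_le_mul_of_nonneg_left hlt' (by linarith : 0 ≤ C₀)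
      have e2' : wdist S 1 (h n) ≤ C₀ * len n + C₀ := e2
      linarith
    -- the companion ray is a limit of `H`-geodesics from `1` to points of `H` close to `γ n`
    obtain ⟨β, hβ⟩ := ultralimit (β := c) (F := fun k => {g | wdist TH 1 g ≤ k})
      (fun k => ball_finite hT hTf 1 k) (by
        intro k
        filter_upwards [hlenbig k] with n hn
        have := hc n 0 (Nat.zero_le _) k hn
        rw [hc0, abs_sub_comm, abs_of_nonneg (by simp)] at this
        simp [this])
    have hβg : IsGeodSeq (wdist TH) β := limit_geod hβ (by
      intro K
      filter_upwards [hlenbig K] with n hn i hi j hj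
      exact hc n i (hi.trans hn) j (hj.trans hn))
    have hβ0 : β 0 = 1 := by
      obtain ⟨n, hn⟩ := (hβ 0).exists
      rw [← hn 0 le_rfl, hc0]
    have hβγ : ∀ n, ∃ m, wdist S (β n) (γ m) ≤ r := by
      intro n
      obtain ⟨k, hk, hk'⟩ := ((hβ n).and (hlenbig n)).exists
      rw [← hk n le_rfl]
      exact hnear k n hk'
    have hγβ : ∀ m, ∃ n, wdist S (γ m) (β n) ≤ D' := by
      intro k
      have hex : ∀ l, ∃ m, wdist S (β l) (γ m) ≤ r ∧ (l = 0 → m = 0) := by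
        intro l
        by_cases hl : l = 0
        · exact ⟨0, by simp [hl, hβ0, h0, hd.self, hr0], fun _ => rfl⟩
        · obtain ⟨m, hm⟩ := hβγ l
          exact ⟨m, hm, fun h => absurd h hl⟩
      choose f hf using hex
      obtain ⟨n, hn⟩ := exists_nat_gt (C₀ * (k + r) + C₀)
      have hdq := hq.dq (n := n) (c := β) (fun i _ j _ => hβg i j)
      obtain ⟨l, -, hl⟩ := coarse_connected (k := k) (n := n) hd hγ hdq.step
        (fun l _ => (hf l).1) (by rw [(hf 0).2 rfl]; exact Nat.zero_le _) (by
          by_contra hlt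
          push Not at hlt
          have hlt' : (f n : ℝ) ≤ k := by exact_mod_cast hlt.le
          have e1 := hγ 0 (f n)
          rw [abs_sub_comm, abs_of_nonneg (by simp), h0] at e1
          have e2 := (hdq.2 0 (Nat.zero_le _) n le_rfl).1
          rw [abs_sub_comm, abs_of_nonneg (by simp)] at e2
          simp only [hβ0] at e2
          push_cast at e1 e2
          have t := hd.tri 1 (γ (f n)) (β n)
          rw [hd.comm (γ (f n))] at t
          have := (hf n).1
          have m := mul_le_mul_of_nonneg_left (by linarith : wdist S 1 (β n : G) ≤ k + r)
            (by linarith : 0 ≤ C₀)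
          linarith)
      exact ⟨l, hl⟩
    have hβγ' : ∀ n, ∃ m, wdist S (β n) (γ m) ≤ D' := fun n =>
      (hβγ n).imp fun m hm => hm.trans (by
        have := abs_nonneg (2 * C₀)
        rw [hD']
        linarith)
    refine ⟨β, hβ0, hβg, ?_, hβγ', hγβ⟩
    refine hN.pull (φ := Subtype.val) hd hdH hC₀ hD'0 (fun z z' => (hq.2 z z').1)
      (fun z z' => (hq.2 z z').2) ?_ ?_
    · rintro _ ⟨n, rfl⟩
      obtain ⟨m, hm⟩ := hβγ' n
      exact ⟨γ m, ⟨m, rfl⟩, hm⟩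
    · rintro _ ⟨m, rfl⟩
      obtain ⟨n, hn⟩ := hγβ m
      exact ⟨β n, ⟨n, rfl⟩, hn⟩

end Groups
end MorseGoG

namespace MorseGoG

/-! ### Halfspaces in trees -/

section Tree

variable {V : Type*} {T : SimpleGraph V}

theorem halfspace_or (hT : T.IsTree) {a b : V} (h : T.Adj a b) (v : V) :
    v ∈ halfspace T a b ∨ v ∈ halfspace T b a :=
  (lt_or_gt_of_ne (hT.dist_ne_of_adj v h)).symm

theorem halfspace_not {a b v : V} (h : v ∈ halfspace T a b) : v ∉ halfspace T b a :=
  fun h' => lt_asymm (show T.dist v b < T.dist v a from h) h'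

theorem not_halfspace_iff (hT : T.IsTree) {a b : V} (h : T.Adj a b) {v : V} :
    v ∉ halfspace T a b ↔ v ∈ halfspace T b a :=
  ⟨fun h' => (halfspace_or hT h v).resolve_left h', fun h' => halfspace_not h'⟩

theorem halfspace_dist (hT : T.IsTree) {a b v : V} (h : T.Adj a b) (hv : v ∈ halfspace T a b) :
    T.dist v a = T.dist v b + 1 := by
  have hv' : T.dist v b < T.dist v a := hv
  rcases hT.dist_eq_dist_add_one_of_adj v h with h1 | h1 <;> omega

theorem left_mem_halfspace {a b : V} (h : T.Adj a b) : b ∈ halfspace T a b := by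
  show T.dist b b < T.dist b a
  rw [SimpleGraph.dist_self, SimpleGraph.dist_eq_one_iff_adj.2 h.symm]
  exact one_pos

/-- Every vertex other than `x` lies beyond an edge at `x`; this edge is unique by
`direction_unique`. -/
theorem exists_direction (hT : T.IsTree) {x v : V} (h : v ≠ x) :
    ∃ b, T.Adj x b ∧ v ∈ halfspace T x b := by
  obtain ⟨w, hw⟩ := hT.connected.exists_walk_length_eq_dist x v
  cases w with
  | nil => exact absurd rfl h
  | @cons _ b _ hb w' =>
    refine ⟨b, hb, ?_⟩
    show T.dist v b < T.dist v x
    rw [SimpleGraph.dist_comm, T.dist_comm (u := v), ← hw, SimpleGraph.Walk.length_cons]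
    exact Nat.lt_succ_of_le (SimpleGraph.dist_le w')

theorem direction_unique (hT : T.IsTree) {x v b b' : V} (hb : T.Adj x b) (hb' : T.Adj x b')
    (h : v ∈ halfspace T x b) (h' : v ∈ halfspace T x b') : b = b' := by
  have key : ∀ b, T.Adj x b → v ∈ halfspace T x b →
      ∃ w : T.Walk x v, w.IsPath ∧ w.snd = b := by
    intro b hb h
    obtain ⟨w, hw⟩ := hT.connected.exists_walk_length_eq_dist b v
    refine ⟨SimpleGraph.Walk.cons hb w, ?_, by simp⟩
    apply SimpleGraph.Walk.isPath_of_length_eq_dist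
    have := halfspace_dist hT hb h
    rw [SimpleGraph.Walk.length_cons, hw, T.dist_comm (u := x), this, T.dist_comm]
  obtain ⟨w, hw, e⟩ := key b hb h
  obtain ⟨w', hw', e'⟩ := key b' hb' h'
  have : (⟨w, hw⟩ : T.Path x v) = ⟨w', hw'⟩ := (hT.isAcyclic.subsingleton_path x v).elim _ _
  rw [← e, ← e', show w = w' from congrArg Subtype.val this]

/-- The only edge of a tree joining the two sides of the edge `{a, b}` is that edge itself. -/
theorem crossing_edge (hT : T.IsTree) {a b c e : V} (hab : T.Adj a b) (hce : T.Adj c e)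
    (hc : c ∈ halfspace T b a) (he : e ∈ halfspace T a b) : c = a ∧ e = b := by
  have h1 := halfspace_dist hT hab.symm hc
  have h2 := halfspace_dist hT hab he
  have h3 := hT.dist_eq_dist_add_one_of_adj a hce
  have h4 := hT.dist_eq_dist_add_one_of_adj b hce
  rw [T.dist_comm (u := a), T.dist_comm (u := a) (v := e)] at h3
  rw [T.dist_comm (u := b), T.dist_comm (u := b) (v := e)] at h4
  have h5 : T.dist c a = T.dist e b := by omega
  have h6 : c = a := by
    by_contra hne
    obtain ⟨f, hf, haf⟩ := exists_direction hT (Ne.symm hne)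
    have haf' := halfspace_dist hT hf haf
    have hbf : b ∈ halfspace T c f := by
      show T.dist b f < T.dist b c
      have := hT.connected.dist_triangle (u := b) (v := a) (w := f)
      rw [SimpleGraph.dist_eq_one_iff_adj.2 hab.symm] at this
      rw [T.dist_comm (u := b) (v := c), h1]
      rw [T.dist_comm (u := a) (v := c)] at haf'
      omega
    have hbe : b ∈ halfspace T c e := by
      show T.dist b e < T.dist b c
      rw [T.dist_comm, T.dist_comm (u := b)]
      omega
    have := direction_unique hT hf hce hbf hbe
    subst this
    rw [T.dist_comm (u := a) (v := c), T.dist_comm (u := a)] at haf'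
    omega
  refine ⟨h6, ?_⟩
  subst h6
  rw [SimpleGraph.dist_self] at h5
  exact (hT.connected.dist_eq_zero_iff).1 h5.symm

/-- A walk between the two sides of an edge passes through both endpoints of the edge. -/
theorem dart_of_separated (hT : T.IsTree) {a b : V} (hab : T.Adj a b) {u w : V} (p : T.Walk u w)
    (hu : u ∈ halfspace T b a) (hw : w ∈ halfspace T a b) : a ∈ p.support ∧ b ∈ p.support := by
  induction p with
  | nil => exact absurd hw (halfspace_not hu)
  | @cons u v w h p ih =>
    rcases halfspace_or hT hab v with hv | hv
    · obtain ⟨rfl, rfl⟩ := crossing_edge hT hab h hu hv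
      exact ⟨by simp, by simp⟩
    · have := ih hv hw
      simp [this.1, this.2]

theorem separating_finite (hT : T.IsTree) (u w : V) :
    {e : V × V | T.Adj e.1 e.2 ∧ u ∈ halfspace T e.2 e.1 ∧ w ∈ halfspace T e.1 e.2}.Finite := by
  obtain ⟨p⟩ := hT.connected.preconnected u w
  have hf : {v | v ∈ p.support}.Finite := List.finite_toSet _
  refine (hf.prod hf).subset ?_
  rintro ⟨a, b⟩ ⟨h, hu, hw⟩
  exact dart_of_separated hT h p hu hw

theorem walk_across (hT : T.IsTree) {a b : V} (hab : T.Adj a b) {u c : V} (p : T.Walk u c)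
    (hu : u ∈ halfspace T a b) (hc : c ∈ halfspace T b a) :
    T.dist u b + 1 + T.dist a c ≤ p.length := by
  induction p with
  | nil => exact absurd hc (halfspace_not hu)
  | @cons u v c h p ih =>
    rw [SimpleGraph.Walk.length_cons]
    rcases halfspace_or hT hab v with hv | hv
    · have := ih hv hc
      have t := hT.connected.dist_triangle (u := u) (v := v) (w := b)
      rw [SimpleGraph.dist_eq_one_iff_adj.2 h] at t
      omega
    · obtain ⟨rfl, rfl⟩ := crossing_edge hT hab h.symm hv hu
      have := SimpleGraph.dist_le p
      rw [SimpleGraph.dist_self]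
      omega

theorem halfspace_convex (hT : T.IsTree) {a b : V} (hab : T.Adj a b) {u v c : V}
    (hu : u ∈ halfspace T a b) (hv : v ∈ halfspace T a b)
    (h : T.dist u c + T.dist c v = T.dist u v) : c ∈ halfspace T a b := by
  by_contra hc
  rw [not_halfspace_iff hT hab] at hc
  obtain ⟨p, hp⟩ := hT.connected.exists_walk_length_eq_dist u c
  obtain ⟨q, hq⟩ := hT.connected.exists_walk_length_eq_dist v c
  have h1 := walk_across hT hab p hu hc
  have h2 := walk_across hT hab q hv hc
  have t := hT.connected.dist_triangle (u := u) (v := b) (w := v)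
  rw [hp] at h1
  rw [hq] at h2
  rw [T.dist_comm (u := c)] at h
  rw [T.dist_comm (u := b)] at t
  omega

end Tree

section Action

variable {G : Type*} [Group G] {V : Type*} [MulAction G V] {T : SimpleGraph V}

theorem dist_smul (hT : T.IsTree) (h : ∀ (g : G) (a b : V), T.Adj a b → T.Adj (g • a) (g • b))
    (g : G) (a b : V) : T.dist (g • a) (g • b) = T.dist a b := by
  have key : ∀ (g : G) (a b : V), T.dist (g • a) (g • b) ≤ T.dist a b := by
    intro g a b
    obtain ⟨w, hw⟩ := hT.connected.exists_walk_length_eq_dist a b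
    let f : T →g T := ⟨fun v => g • v, fun {a b} hab => h g a b hab⟩
    have := SimpleGraph.dist_le (w.map f)
    rw [SimpleGraph.Walk.length_map, hw] at this
    exact this
  refine le_antisymm (key g a b) ?_
  have := key g⁻¹ (g • a) (g • b)
  rwa [inv_smul_smul, inv_smul_smul] at this

theorem smul_mem_halfspace (hT : T.IsTree)
    (h : ∀ (g : G) (a b : V), T.Adj a b → T.Adj (g • a) (g • b)) (g : G) {a b v : V} :
    g • v ∈ halfspace T (g • a) (g • b) ↔ v ∈ halfspace T a b := by
  simp only [halfspace, mem_ofPred_eq, dist_smul hT h]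

end Action
end MorseGoG

namespace MorseGoG

/-! ### Edge sets in the group -/

section Edges

theorem IsGeodSeg.step_le {X : Type*} {d : X → X → ℝ} {n : ℕ} {c : ℕ → X} (h : IsGeodSeg d n c) {l : ℕ}
    (hl : l < n) : d (c l) (c (l + 1)) ≤ 1 := by
  rw [h l hl.le (l + 1) hl]
  simp

theorem IsGeodSeq.step_le {X : Type*} {d : X → X → ℝ} {c : ℕ → X} (h : IsGeodSeq d c) (l : ℕ) :
    d (c l) (c (l + 1)) ≤ 1 := by
  rw [h l (l + 1)]
  simp

variable {G : Type*} [Group G] {V : Type*} [MulAction G V]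

/-- The standing hypotheses: `S` is a finite generating set of `G`, which acts on the tree `T`
with finitely generated undistorted edge groups having empty relative Morse boundary. -/
structure Splitting (S : Set G) (T : SimpleGraph V) : Prop where
  gen : Subgroup.closure S = ⊤
  fin : S.Finite
  act : ActsOnTree G T
  edge : ∀ a b : V, T.Adj a b →
    FGUndistorted S (edgeStab G a b) ∧ RelMorseEmpty S (edgeStab G a b)

/-- The edge set of `{a, b}`: endpoints of edges of the Cayley graph whose images under the orbit
map `g ↦ g • p` are separated by the edge `{a, b}` of the tree. -/
def Eset (S : Set G) (T : SimpleGraph V) (p a b : V) : Set G :=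
  {g | ∃ g', wdist S g g' ≤ 1 ∧ ((g • p ∈ halfspace T a b ∧ g' • p ∈ halfspace T b a) ∨
    (g • p ∈ halfspace T b a ∧ g' • p ∈ halfspace T a b))}

variable {S : Set G} {T : SimpleGraph V} {p : V}

theorem Eset_symm (a b : V) : Eset S T p a b = Eset S T p b a := by
  ext g
  exact exists_congr fun g' => and_congr_right fun _ => or_comm

theorem Splitting.tree (hX : Splitting S T) : T.IsTree := hX.act.1

theorem Splitting.adj (hX : Splitting S T) (g : G) {a b : V} (h : T.Adj a b) :
    T.Adj (g • a) (g • b) := hX.act.2.1 g a b h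

theorem Splitting.smul_mem (hX : Splitting S T) (g : G) {a b v : V} :
    g • v ∈ halfspace T (g • a) (g • b) ↔ v ∈ halfspace T a b :=
  smul_mem_halfspace hX.tree hX.act.2.1 g

theorem Splitting.pm (hX : Splitting S T) : PM (wdist S) := wdist_pm hX.gen

theorem mul_mem_Eset (hX : Splitting S T) (k : G) {a b : V} {g : G} (h : g ∈ Eset S T p a b) :
    k * g ∈ Eset S T p (k • a) (k • b) := by
  obtain ⟨g', h1, h2⟩ := h
  refine ⟨k * g', by rwa [wdist_left], ?_⟩
  simpa only [mul_smul, hX.smul_mem] using h2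

theorem mul_mem_Eset_iff (hX : Splitting S T) (k : G) {a b : V} {g : G} :
    k * g ∈ Eset S T p (k • a) (k • b) ↔ g ∈ Eset S T p a b := by
  refine ⟨fun h => ?_, mul_mem_Eset hX k⟩
  simpa using mul_mem_Eset hX k⁻¹ h

/-- A path whose ends lie on different sides of an edge traverses the edge set. -/
theorem path_cross (hX : Splitting S T) {a b : V} (hab : T.Adj a b) {c : ℕ → G} {i j : ℕ}
    (hij : i ≤ j) (hc : ∀ l, i ≤ l → l < j → wdist S (c l) (c (l + 1)) ≤ 1)
    (hi : c i • p ∈ halfspace T a b) (hj : c j • p ∈ halfspace T b a) :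
    ∃ l, i ≤ l ∧ l < j ∧ c l ∈ Eset S T p a b ∧ c (l + 1) ∈ Eset S T p a b := by
  induction j, hij using Nat.le_induction with
  | base => exact absurd hj (halfspace_not hi)
  | succ j hij ih =>
    rcases halfspace_or hX.tree hab (c j • p) with h | h
    · have h1 := hc j hij (Nat.lt_succ_self _)
      exact ⟨j, hij, Nat.lt_succ_self _, ⟨_, h1, Or.inl ⟨h, hj⟩⟩,
        ⟨c j, by rwa [hX.pm.comm], Or.inr ⟨hj, h⟩⟩⟩
    · obtain ⟨l, h1, h2, h3⟩ := ih (fun l hl hl' => hc l hl (hl'.trans (Nat.lt_succ_self _))) h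
      exact ⟨l, h1, h2.trans (Nat.lt_succ_self _), h3⟩

theorem cross_near (hX : Splitting S T) {a b : V} (hab : T.Adj a b) {u w : G}
    (hu : u • p ∈ halfspace T a b) (hw : w • p ∈ halfspace T b a) :
    ∃ z ∈ Eset S T p a b, wdist S u z ≤ wdist S u w := by
  obtain ⟨n, c, hn, hc, hc0, hcn⟩ := exists_geodSeg hX.gen u w
  obtain ⟨l, -, hl, hz, -⟩ := path_cross (p := p) (c := c) hX hab (Nat.zero_le n)
    (fun l _ hl => hc.step_le hl) (by rwa [hc0]) (by rwa [hcn])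
  refine ⟨c l, hz, ?_⟩
  rw [← hn, ← hc0, hc 0 (Nat.zero_le _) l hl.le, abs_sub_comm, abs_of_nonneg (by simp)]
  simpa using hl.le

/-- By minimality of the action, every orbit meets every halfspace. -/
theorem exists_in_halfspace (hX : Splitting S T) {a b : V} (hab : T.Adj a b) :
    ∃ g : G, g • p ∈ halfspace T a b := by
  by_contra hne
  push Not at hne
  have hT := hX.tree
  have hW := hX.act.2.2.2.2 {v | ∀ g : G, g • v ∈ halfspace T b a}
    ⟨p, fun g => (not_halfspace_iff hT hab).1 (hne g)⟩
    (fun g v hv k => by rw [← mul_smul]; exact hv _)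
    (fun u hu v hv c hc g => halfspace_convex hT hab.symm (hu g) (hv g) (by
      simpa only [dist_smul hT hX.act.2.1] using hc))
  have hb : b ∈ {v | ∀ g : G, g • v ∈ halfspace T b a} := by rw [hW]; trivial
  have := hb 1
  rw [one_smul] at this
  exact halfspace_not this (left_mem_halfspace hab)

theorem Eset_nonempty (hX : Splitting S T) {a b : V} (hab : T.Adj a b) :
    (Eset S T p a b).Nonempty := by
  obtain ⟨u, hu⟩ := exists_in_halfspace (p := p) hX hab
  obtain ⟨w, hw⟩ := exists_in_halfspace (p := p) hX hab.symm
  obtain ⟨z, hz, -⟩ := cross_near hX hab hu hw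
  exact ⟨z, hz⟩

theorem edges_at_finite (hX : Splitting S T) (g : G) :
    {e : V × V | T.Adj e.1 e.2 ∧ g ∈ Eset S T p e.1 e.2}.Finite := by
  have hf := (ball_finite hX.gen hX.fin g 1).biUnion (fun g' _ =>
    (separating_finite hX.tree (g • p) (g' • p)).union
      (separating_finite hX.tree (g' • p) (g • p)))
  refine hf.subset ?_
  rintro ⟨a, b⟩ ⟨hab, g', h1, h2⟩
  refine mem_biUnion (show g' ∈ {g' | wdist S g g' ≤ 1} from h1) ?_
  rcases h2 with h2 | h2
  · exact Or.inr ⟨hab, h2.2, h2.1⟩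
  · exact Or.inl ⟨hab, h2.1, h2.2⟩

theorem edges_near_finite (hX : Splitting S T) (r : ℝ) :
    {e : V × V | T.Adj e.1 e.2 ∧ ∃ z ∈ Eset S T p e.1 e.2, wdist S 1 z ≤ r}.Finite := by
  refine ((ball_finite hX.gen hX.fin 1 r).biUnion
    (fun g _ => edges_at_finite (p := p) hX g)).subset ?_
  rintro ⟨a, b⟩ ⟨hab, z, hz, hr⟩
  exact mem_biUnion (show z ∈ {z | wdist S 1 z ≤ r} from hr) ⟨hab, hz⟩

theorem finite_bound {ι : Type*} {F : Set ι} (hF : F.Finite) {P : ι → ℝ → Prop}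
    (hm : ∀ i r r', r ≤ r' → P i r → P i r') (h : ∀ i ∈ F, ∃ r, P i r) :
    ∃ r, 0 ≤ r ∧ ∀ i ∈ F, P i r := by
  choose! f hf using h
  obtain ⟨M, hM⟩ := (hF.image f).bddAbove
  exact ⟨max M 0, le_max_right _ _, fun i hi =>
    hm i _ _ ((hM (mem_image_of_mem f hi)).trans (le_max_left _ _)) (hf i hi)⟩

/-- An equivariant property of edges that holds with some constant for each edge holds with a
uniform constant, since `G` acts on the edges with finitely many orbits. -/
theorem edge_uniform (hX : Splitting S T) (p : V) {P : V → V → ℝ → Prop}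
    (hm : ∀ a b r r', r ≤ r' → P a b r → P a b r')
    (hinv : ∀ (k : G) a b r, P a b r → P (k • a) (k • b) r)
    (h : ∀ a b, T.Adj a b → ∃ r, P a b r) : ∃ r, 0 ≤ r ∧ ∀ a b, T.Adj a b → P a b r := by
  obtain ⟨r, hr, hP⟩ := finite_bound (edges_at_finite (p := p) hX 1)
    (P := fun e r => P e.1 e.2 r) (fun e => hm e.1 e.2) (fun e he => h e.1 e.2 he.1)
  refine ⟨r, hr, fun a b hab => ?_⟩
  obtain ⟨z, hz⟩ := Eset_nonempty (p := p) hX hab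
  have h1 : ((z⁻¹ • a, z⁻¹ • b) : V × V) ∈
      {e : V × V | T.Adj e.1 e.2 ∧ (1 : G) ∈ Eset S T p e.1 e.2} :=
    ⟨hX.adj _ hab, by simpa using mul_mem_Eset hX z⁻¹ hz⟩
  simpa using hinv z _ _ _ (hP _ h1)

/-- Elements `g` for which `g⁻¹ • x` takes finitely many values lie in a bounded neighbourhood
of the stabiliser of `x`. -/
theorem finite_near {W : Type*} [MulAction G W] (x : W) {Q : Set W}
    (hQ : Q.Finite) :
    ∃ ρ : ℝ, 0 ≤ ρ ∧ ∀ g : G, g⁻¹ • x ∈ Q → ∃ v ∈ MulAction.stabilizer G x, wdist S g v ≤ ρ := by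
  obtain ⟨ρ, h0, h⟩ := finite_bound hQ (P := fun q ρ => ∀ g : G, g⁻¹ • x = q →
      ∃ v ∈ MulAction.stabilizer G x, wdist S g v ≤ ρ)
    (fun i r r' hr h g hg => (h g hg).imp fun v hv => ⟨hv.1, hv.2.trans hr⟩) (by
      intro q _
      by_cases hy : ∃ y : G, y⁻¹ • x = q
      · obtain ⟨y, hy⟩ := hy
        refine ⟨wdist S 1 y⁻¹, fun g hg => ⟨g * y⁻¹, ?_, ?_⟩⟩
        · rw [MulAction.mem_stabilizer_iff, mul_smul, hy, ← hg, smul_inv_smul]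
        · have := wdist_left (S := S) g 1 y⁻¹
          rw [mul_one] at this
          rw [this]
      · exact ⟨0, fun g hg => absurd ⟨g, hg⟩ hy⟩)
  exact ⟨ρ, h0, fun g hg => h _ hg g rfl⟩

theorem Eset_near_stab (hX : Splitting S T) {a b : V} (hab : T.Adj a b) :
    ∃ ρ : ℝ, 0 ≤ ρ ∧ ∀ g ∈ Eset S T p a b, ∃ v ∈ edgeStab G a b, wdist S g v ≤ ρ := by
  obtain ⟨ρ, h0, h⟩ := finite_near (S := S) ((a, b) : V × V) (edges_at_finite (p := p) hX 1)
  refine ⟨ρ, h0, fun g hg => ?_⟩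
  obtain ⟨v, hv, hd⟩ := h g ⟨hX.adj _ hab, by simpa using mul_mem_Eset hX g⁻¹ hg⟩
  rw [MulAction.mem_stabilizer_iff] at hv
  exact ⟨v, ⟨congrArg Prod.fst hv, congrArg Prod.snd hv⟩, hd⟩

theorem stab_near_Eset (hX : Splitting S T) {a b : V} (hab : T.Adj a b) :
    ∃ ρ : ℝ, ∀ v ∈ edgeStab G a b, ∃ z ∈ Eset S T p a b, wdist S v z ≤ ρ := by
  obtain ⟨z, hz⟩ := Eset_nonempty (p := p) hX hab
  refine ⟨wdist S 1 z, fun v hv => ⟨v * z, ?_, ?_⟩⟩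
  · have := mul_mem_Eset hX v hz
    rwa [show v • a = a from hv.1, show v • b = b from hv.2] at this
  · have := wdist_left (S := S) v 1 z
    rw [mul_one] at this
    rw [this]

/-- Edge sets are uniformly quasiconvex in the weak sense: any two points are joined by some
uniform quasi-geodesic close to the edge set. -/
theorem Eset_qg (hX : Splitting S T) (p : V) :
    ∃ C : ℝ, 0 ≤ C ∧ ∀ a b, T.Adj a b → 1 ≤ C ∧
      ∀ x ∈ Eset S T p a b, ∀ y ∈ Eset S T p a b,
      ∃ (n : ℕ) (c : ℕ → G), DQ (wdist S) C n c ∧ c 0 = x ∧ c n = y ∧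
        ∀ i ≤ n, ∃ z ∈ Eset S T p a b, wdist S (c i) z ≤ C := by
  have hd := hX.pm
  apply edge_uniform hX p
  · rintro a b r r' hr ⟨h1, h⟩
    refine ⟨h1.trans hr, fun x hx y hy => ?_⟩
    obtain ⟨n, c, hc, h0, hn, hz⟩ := h x hx y hy
    exact ⟨n, c, hc.mono hd hr, h0, hn, fun i hi =>
      (hz i hi).imp fun z hz => ⟨hz.1, hz.2.trans hr⟩⟩
  · rintro k a b r ⟨h1, h⟩
    refine ⟨h1, fun x hx y hy => ?_⟩
    obtain ⟨n, c, hc, h0, hn, hz⟩ := h (k⁻¹ * x)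
      (by rw [← mul_mem_Eset_iff hX k]; simpa using hx) (k⁻¹ * y)
      (by rw [← mul_mem_Eset_iff hX k]; simpa using hy)
    refine ⟨n, fun i => k * c i, ⟨hc.1, fun i hi j hj => ?_⟩, by simp [h0], by simp [hn],
      fun i hi => ?_⟩
    · simp only [wdist_left]
      exact hc.2 i hi j hj
    · obtain ⟨z, hz, hz'⟩ := hz i hi
      exact ⟨k * z, mul_mem_Eset hX k hz, by rwa [wdist_left]⟩
  · intro a b hab
    obtain ⟨ρ, hρ, h1⟩ := Eset_near_stab (p := p) hX hab
    obtain ⟨ρ', h2⟩ := stab_near_Eset (p := p) hX hab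
    obtain ⟨TE, hTE, C, hC, hq⟩ := (hX.edge a b hab).1
    have hq' : QIncl S (edgeStab G a b) (TE : Set (edgeStab G a b)) C := ⟨hC, hq⟩
    set C' := max (C * (2 * ρ + 2)) (ρ + ρ') with hC'
    refine ⟨C', ?_, fun x hx y hy => ?_⟩
    · refine le_max_of_le_left ?_
      nlinarith
    · obtain ⟨v, hv, hxv⟩ := h1 x hx
      obtain ⟨w, hw, hyw⟩ := h1 y hy
      obtain ⟨n, c, -, hc, hc0, hcn⟩ := exists_geodSeg hTE ⟨v, hv⟩ ⟨w, hw⟩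
      obtain ⟨c', hc', h0, hn, hnear, -⟩ := (hq'.dq hc).extend hd hρ (x := x) (y := y)
        (by simpa [hc0] using hxv) (by simpa [hcn] using hyw)
      refine ⟨n + 1, c', hc'.mono hd (le_max_left _ _), h0, hn, fun i hi => ?_⟩
      obtain ⟨j, -, hj⟩ := hnear i hi
      obtain ⟨z, hz, hjz⟩ := h2 (c j) (c j).2
      exact ⟨z, hz, (hd.tri _ _ _).trans ((add_le_add hj hjz).trans (le_max_right _ _))⟩

/-- A Morse ray stays close to an edge set between any two visits to its neighbourhood. -/
theorem ray_between (hX : Splitting S T) (p : V) (N : ℝ → ℝ) {ρ : ℝ} (hρ : 0 ≤ ρ) :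
    ∃ D : ℝ, ∀ a b, T.Adj a b → ∀ γ : ℕ → G, IsGeodSeq (wdist S) γ →
      MorseSet (wdist S) N (range γ) → ∀ i k j, i ≤ k → k ≤ j →
      InNbhd (wdist S) (Eset S T p a b) ρ (γ i) → InNbhd (wdist S) (Eset S T p a b) ρ (γ j) →
      InNbhd (wdist S) (Eset S T p a b) D (γ k) := by
  have hd := hX.pm
  obtain ⟨C, -, hU⟩ := Eset_qg hX p
  refine ⟨2 * (C * (2 * ρ + 2)) + 3 * N (3 * (C * (2 * ρ + 2))) + (ρ + C),
    fun a b hab γ hγ hN i k j hik hkj hi hj => ?_⟩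
  obtain ⟨x, hx, hix⟩ := hi
  obtain ⟨y, hy, hjy⟩ := hj
  obtain ⟨n, c, hc, h0, hn, hz⟩ := (hU a b hab).2 x hx y hy
  obtain ⟨c', hc', h0', hn', hnear, -⟩ := hc.extend hd hρ (x := γ i) (y := γ j)
    (by rwa [h0]) (by rwa [hn])
  obtain ⟨l, hl, hkl⟩ := hc'.near_ray hd hγ hN h0' hn' hik hkj
  obtain ⟨m, hm, hlm⟩ := hnear l hl
  obtain ⟨z, hzE, hmz⟩ := hz m hm
  refine ⟨z, hzE, ?_⟩
  have t1 := hd.tri (γ k) (c' l) z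
  have t2 := hd.tri (c' l) (c m) z
  linarith

/-- Morse rays leave every neighbourhood of an edge set, in time depending only on the Morse
gauge: otherwise a limit of rays would stay close to the edge group, whose relative Morse boundary
is empty. -/
theorem leaves_edge (hX : Splitting S T) (N : ℝ → ℝ) {a b : V} (hab : T.Adj a b) (r : ℝ) :
    ∃ R : ℕ, ∀ γ : ℕ → G, γ 0 = 1 → IsGeodSeq (wdist S) γ → MorseSet (wdist S) N (range γ) →
      ∀ n ≥ R, ∀ z ∈ Eset S T p a b, r < wdist S (γ n) z := by
  have hd := hX.pm
  by_contra hne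
  push Not at hne
  choose γ hγ0 hγ hN n hn z hz hr using hne
  obtain ⟨z₀, hz₀⟩ := Eset_nonempty (p := p) hX hab
  obtain ⟨D, hD⟩ := ray_between hX p N (ρ := max r (wdist S 1 z₀))
    (le_max_of_le_right (hd.nonneg _ _))
  have hnear : ∀ R, ∀ k ≤ n R, InNbhd (wdist S) (Eset S T p a b) D (γ R k) := fun R k hk =>
    hD a b hab (γ R) (hγ R) (hN R) 0 k (n R) (Nat.zero_le _) hk
      ⟨z₀, hz₀, by rw [hγ0]; exact le_max_right _ _⟩ ⟨z R, hz R, (hr R).trans (le_max_left _ _)⟩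
  -- rays that are close to the edge set for longer and longer times have a limit ray that stays
  -- close to the edge group forever
  obtain ⟨b', hb'⟩ := ultralimit (β := γ) (F := fun k => {g | wdist S 1 g ≤ k})
    (fun k => ball_finite hX.gen hX.fin 1 k) (by
      intro k
      refine Eventually.of_forall fun m => ?_
      have := hγ m 0 k
      rw [hγ0, abs_sub_comm, abs_of_nonneg (by simp)] at this
      simp [this])
  have hg' : IsGeodSeq (wdist S) b' :=
    limit_geod hb' (fun K => Eventually.of_forall fun m i _ j _ => hγ m i j)
  have hN' := limit_morse hd hb' hγ hN
  have h0' : b' 0 = 1 := by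
    obtain ⟨m, hm⟩ := (hb' 0).exists
    rw [← hm 0 le_rfl, hγ0]
  obtain ⟨ρ, hρ, hE⟩ := Eset_near_stab (p := p) hX hab
  have hclose : ∀ k, ∃ h ∈ edgeStab G a b, wdist S (b' k) h ≤ max (D + ρ) 0 := by
    intro k
    have hev : ∀ᶠ m in (hyperfilter ℕ : Filter ℕ), k ≤ m :=
      (eventually_ge_atTop k).filter_mono Nat.hyperfilter_le_atTop
    obtain ⟨m, hm, hkm⟩ := ((hb' k).and hev).exists
    obtain ⟨y, hy, hky⟩ := hnear m k (hkm.trans (hn m))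
    obtain ⟨h, hh, hyh⟩ := hE y hy
    rw [hm k le_rfl] at hky
    exact ⟨h, hh, (hd.tri _ _ _).trans ((add_le_add hky hyh).trans (le_max_left _ _))⟩
  obtain ⟨⟨TE, hTE, C, hC, hq⟩, hempty⟩ := hX.edge a b hab
  obtain ⟨N', D', htr⟩ := transfer hX.gen hTE TE.finite_toSet
    (show QIncl S (edgeStab G a b) (TE : Set (edgeStab G a b)) C from ⟨hC, hq⟩) N
    (le_max_right (D + ρ) 0)
  obtain ⟨β, -, hβg, hβN, hβ1, hβ2⟩ := htr b' h0' hg' hN' hclose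
  refine hempty TE hTE β hβg ⟨N', hβN⟩ (BddHD.isMorse hd ?_ ⟨N, hN'⟩)
  refine ⟨D', ?_, ?_⟩
  · rintro _ ⟨m, rfl⟩
    obtain ⟨l, hl⟩ := hβ2 m
    exact ⟨_, ⟨l, rfl⟩, hl⟩
  · rintro _ ⟨l, rfl⟩
    obtain ⟨m, hm⟩ := hβ1 l
    exact ⟨_, ⟨m, rfl⟩, hm⟩

end Edges
end MorseGoG

namespace MorseGoG

/-! ### Halfspaces at infinity and ends of the tree -/

section Boundary

variable {G : Type*} [Group G] {S : Set G}

/-- A subset of a stratum is closed iff it contains every ray that agrees with members of the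
subset on arbitrarily long initial segments. -/
theorem isClosed_NGRays_iff {N : ℝ → ℝ} {F : Set (NGRays G S N)} :
    IsClosed F ↔ ∀ γ, (∀ m : ℕ, ∃ γ' ∈ F, ∀ k ≤ m, γ'.1.seq k = γ.1.seq k) → γ ∈ F := by
  let _ : TopologicalSpace G := ⊥
  have : DiscreteTopology G := ⟨rfl⟩
  have hcont : Continuous (fun γ : NGRays G S N => γ.1.seq) := continuous_induced_dom
  constructor
  · intro hF γ hγ
    rw [← hF.closure_eq, mem_closure_iff]
    intro U hU hγU
    obtain ⟨O, hO, rfl⟩ := isOpen_induced_iff.1 hU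
    obtain ⟨I, u, hu, hsub⟩ := isOpen_pi_iff.1 hO _ hγU
    obtain ⟨γ', hγ'F, hγ'⟩ := hγ (I.sup id)
    refine ⟨γ', hsub fun k hk => ?_, hγ'F⟩
    have h1 : γ.1.seq k ∈ u k := (hu k hk).2
    rw [← hγ' k (Finset.le_sup (f := id) hk)] at h1
    exact h1
  · intro h
    rw [← isOpen_compl_iff, isOpen_iff_mem_nhds]
    intro γ hγ
    have : ∃ m : ℕ, ∀ γ' : NGRays G S N, (∀ k ≤ m, γ'.1.seq k = γ.1.seq k) → γ' ∈ Fᶜ := by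
      by_contra hne
      push Not at hne
      refine hγ (h γ fun m => ?_)
      obtain ⟨γ', h1, h2⟩ := hne m
      exact ⟨γ', not_not.1 h2, h1⟩
    obtain ⟨m, hm⟩ := this
    have hev : ∀ᶠ γ' in 𝓝 γ, ∀ k ≤ m, γ'.1.seq k = γ.1.seq k := by
      refine (eventually_all_finite (finite_le_nat m)).2 fun k _ => ?_
      have h1 : Continuous (fun γ : NGRays G S N => γ.1.seq k) := (continuous_apply k).comp hcont
      exact h1.continuousAt.eventually (IsOpen.mem_nhds (isOpen_discrete {γ.1.seq k}) rfl)
    exact hev.mono hm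

theorem isClosed_boundary_iff {F : Set (MorseBoundary G S)} :
    IsClosed F ↔ ∀ N, IsClosed
      {γ : NGRays G S N | (Quot.mk (grayRel S) γ.1 : MorseBoundary G S) ∈ F} := by
  rw [MorseBoundary.instTop, isClosed_iSup_iff]
  exact forall_congr' fun N => isClosed_coinduced

variable {V : Type*} [MulAction G V] {T : SimpleGraph V} {p : V}

/-- The part of the Morse boundary lying on the side of `b` of the edge `{a, b}`: classes of rays
whose image under the orbit map is eventually in that halfspace. -/
def Mside (S : Set G) (T : SimpleGraph V) (p a b : V) : Set (MorseBoundary G S) :=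
  {ξ | ∃ γ : GRay G S, Quot.mk (grayRel S) γ = ξ ∧
    ∃ n₀ : ℕ, ∀ n ≥ n₀, γ.seq n • p ∈ halfspace T a b}

/-- From a time that depends only on the Morse gauge on, a ray stays on one side of a given
edge, since changing sides means meeting the edge set. -/
theorem stable_side (hX : Splitting S T) (N : ℝ → ℝ) {a b : V} (hab : T.Adj a b) :
    ∃ R : ℕ, ∀ γ : ℕ → G, γ 0 = 1 → IsGeodSeq (wdist S) γ → MorseSet (wdist S) N (range γ) →
      ∀ n ≥ R, (γ n • p ∈ halfspace T a b ↔ γ R • p ∈ halfspace T a b) := by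
  obtain ⟨R, hR⟩ := leaves_edge (p := p) hX N hab 0
  refine ⟨R, fun γ h0 hγ hN n hn => ?_⟩
  have key : ∀ a' b', T.Adj a' b' → Eset S T p a' b' = Eset S T p a b →
      γ R • p ∈ halfspace T a' b' → γ n • p ∈ halfspace T a' b' := by
    intro a' b' hab' he h
    by_contra hne
    rw [not_halfspace_iff hX.tree hab'] at hne
    obtain ⟨l, hl, -, hz, -⟩ := path_cross (c := γ) hX hab' hn (fun l _ _ => hγ.step_le l) h hne
    rw [he] at hz
    have := hR γ h0 hγ hN l hl _ hz
    rw [hX.pm.self] at this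
    exact lt_irrefl _ this
  refine ⟨fun h => ?_, key a b hab rfl⟩
  by_contra hne
  rw [not_halfspace_iff hX.tree hab] at hne
  exact halfspace_not h (key b a hab.symm (Eset_symm _ _) hne)

/-- The side of an edge on which a ray finally stays depends only on its boundary point. -/
theorem GRay.leaves {x y : GRay G S} (hX : Splitting S T) (h : grayRel S x y) {a b : V}
    (hab : T.Adj a b) (hx : ∃ n₀ : ℕ, ∀ n ≥ n₀, x.seq n • p ∈ halfspace T a b) :
    ∃ n₀ : ℕ, ∀ n ≥ n₀, y.seq n • p ∈ halfspace T a b := by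
  have hd := hX.pm
  obtain ⟨N, hN⟩ := y.morse
  obtain ⟨r, -, hr⟩ := h
  obtain ⟨R, hR⟩ := leaves_edge (p := p) hX N hab r
  obtain ⟨n₀, hn₀⟩ := hx
  refine ⟨max R ⌈n₀ + r⌉₊, fun n hn => ?_⟩
  by_contra hne
  rw [not_halfspace_iff hX.tree hab] at hne
  obtain ⟨_, ⟨m, rfl⟩, hm⟩ := hr _ ⟨n, rfl⟩
  have hn1 : (n₀ : ℝ) + r ≤ n :=
    (Nat.le_ceil _).trans (by exact_mod_cast (le_max_right _ _).trans hn)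
  have e1 := x.geod 0 m
  have e2 := y.geod 0 n
  rw [abs_sub_comm, abs_of_nonneg (by simp)] at e1 e2
  rw [x.base] at e1
  rw [y.base] at e2
  push_cast at e1 e2
  have t := hd.tri 1 (x.seq m) (y.seq n)
  rw [hd.comm (x.seq m)] at t
  have hm0 : n₀ ≤ m := by
    have : (n₀ : ℝ) ≤ m := by linarith
    exact_mod_cast this
  obtain ⟨z, hz, hz'⟩ := cross_near hX hab.symm hne (hn₀ m hm0)
  rw [Eset_symm] at hz
  have := hR y.seq y.base y.geod hN n ((le_max_left _ _).trans hn) z hz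
  linarith

theorem mk_mem_Mside (hX : Splitting S T) {a b : V} (hab : T.Adj a b) {γ : GRay G S} :
    (Quot.mk (grayRel S) γ : MorseBoundary G S) ∈ Mside S T p a b ↔
      ∃ n₀ : ℕ, ∀ n ≥ n₀, γ.seq n • p ∈ halfspace T a b := by
  constructor
  · rintro ⟨γ', he, h⟩
    exact GRay.leaves hX ((quot_eq_iff hX.gen).1 he) hab h
  · exact fun h => ⟨γ, rfl, h⟩

theorem Mside_disjoint (hX : Splitting S T) {a b : V} (hab : T.Adj a b) {ξ : MorseBoundary G S}
    (h : ξ ∈ Mside S T p a b) : ξ ∉ Mside S T p b a := by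
  obtain ⟨γ, rfl, n, hn⟩ := h
  intro h'
  obtain ⟨m, hm⟩ := (mk_mem_Mside hX hab.symm).1 h'
  exact halfspace_not (hn _ (le_max_left n m)) (hm _ (le_max_right n m))

theorem Mside_cover (hX : Splitting S T) {a b : V} (hab : T.Adj a b) (ξ : MorseBoundary G S) :
    ξ ∈ Mside S T p a b ∨ ξ ∈ Mside S T p b a := by
  obtain ⟨γ, rfl⟩ := Quot.exists_rep ξ
  obtain ⟨N, hN⟩ := γ.morse
  obtain ⟨R, hR⟩ := stable_side (p := p) hX N hab
  have hR := hR γ.seq γ.base γ.geod hN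
  by_cases h : γ.seq R • p ∈ halfspace T a b
  · exact Or.inl ⟨γ, rfl, R, fun n hn => (hR n hn).2 h⟩
  · refine Or.inr ⟨γ, rfl, R, fun n hn => ?_⟩
    rw [← not_halfspace_iff hX.tree hab, hR n hn]
    exact h

theorem isClosed_Mside (hX : Splitting S T) {a b : V} (hab : T.Adj a b) :
    IsClosed (Mside S T p a b) := by
  rw [isClosed_boundary_iff]
  intro N
  rw [isClosed_NGRays_iff]
  intro γ hγ
  obtain ⟨R, hR⟩ := stable_side (p := p) hX N hab
  obtain ⟨γ', h', hγ'⟩ := hγ R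
  obtain ⟨n, hn⟩ := (mk_mem_Mside hX hab).1 h'
  have h1 := hn _ (le_max_left n R)
  rw [hR γ'.1.seq γ'.1.base γ'.1.geod γ'.2 _ (le_max_right n R), hγ' R le_rfl] at h1
  exact (mk_mem_Mside hX hab).2 ⟨R, fun k hk =>
    (hR γ.1.seq γ.1.base γ.1.geod γ.2 k hk).2 h1⟩

theorem compl_Mside (hX : Splitting S T) {a b : V} (hab : T.Adj a b) :
    (Mside S T p a b)ᶜ = Mside S T p b a := by
  ext ξ
  exact ⟨fun h => (Mside_cover hX hab ξ).resolve_left h, fun h => Mside_disjoint hX hab.symm h⟩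

theorem isClopen_Mside (hX : Splitting S T) {a b : V} (hab : T.Adj a b) :
    IsClopen (Mside S T p a b) := by
  refine ⟨isClosed_Mside hX hab, ?_⟩
  rw [← isClosed_compl_iff, compl_Mside hX hab]
  exact isClosed_Mside hX hab.symm

theorem preconnected_side (hX : Splitting S T) {a b : V} (hab : T.Adj a b)
    {K : Set (MorseBoundary G S)} (hK : IsPreconnected K) :
    K ⊆ Mside S T p a b ∨ K ⊆ Mside S T p b a := by
  by_cases h : (K ∩ Mside S T p a b).Nonempty
  · exact Or.inl (hK.subset_isClopen (isClopen_Mside hX hab) h)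
  · right
    intro ξ hξ
    rw [← compl_Mside hX hab]
    exact fun hside => h ⟨ξ, hξ, hside⟩

/-- A set of boundary points lying, from each vertex, in the direction of some neighbour converges
to an end of the tree; it has at most one element, since the edge sets met on the way to the end
provide quasi-geodesics between the rays far from the origin. -/
theorem subsingleton_of_end (hX : Splitting S T) {K : Set (MorseBoundary G S)}
    (h : ∀ x, ∃ b, T.Adj x b ∧ K ⊆ Mside S T p x b) : K.Subsingleton := by
  intro ξ hξ ξ' hξ'
  choose f hf hK using h
  have hd := hX.pm
  have hT := hX.tree
  -- the geodesic ray of the tree that leaves `p` towards the end; edges far along it have edge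
  -- sets outside any given ball of the group
  set x : ℕ → V := fun i => f^[i] p with hx
  have hxs : ∀ i, x (i + 1) = f (x i) := fun i => Function.iterate_succ_apply' f i p
  have hadj : ∀ i, T.Adj (x i) (x (i + 1)) := fun i => by rw [hxs]; exact hf _
  have hKi : ∀ i, K ⊆ Mside S T p (x i) (x (i + 1)) := fun i => by rw [hxs]; exact hK _
  have hne : ∀ i, x (i + 1 + 1) ≠ x i := by
    intro i he
    have := hKi (i + 1) hξ
    rw [he] at this
    exact Mside_disjoint hX (hadj i) (hKi i hξ) this
  have hback : ∀ i, p ∈ halfspace T (x (i + 1)) (x i) := by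
    intro i
    induction i with
    | zero => exact left_mem_halfspace (hadj 0).symm
    | succ i ih =>
      rw [← not_halfspace_iff hT (hadj (i + 1))]
      exact fun h' => hne i (direction_unique hT (hadj (i + 1)) (hadj i).symm h' ih)
  have hdist : ∀ i, T.dist p (x i) = i := by
    intro i
    induction i with
    | zero => exact SimpleGraph.dist_self
    | succ i ih => rw [halfspace_dist hT (hadj i).symm (hback i), ih]
  have hinj : Function.Injective x := fun i j hij => by
    have := congrArg (T.dist p) hij
    rwa [hdist, hdist] at this
  obtain ⟨γ, rfl⟩ := Quot.exists_rep ξ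
  obtain ⟨γ', rfl⟩ := Quot.exists_rep ξ'
  obtain ⟨N, hN⟩ := γ.morse
  obtain ⟨N', hN'⟩ := γ'.morse
  obtain ⟨C, -, hC⟩ := Eset_qg hX p
  refine Quot.sound (fellow_travel hX.gen γ.geod γ'.geod γ.base γ'.base hN hN' (C := C) ?_)
  intro R
  have hinj' : Function.Injective fun i => (x i, x (i + 1)) := fun i j hij =>
    hinj (congrArg Prod.fst hij)
  obtain ⟨i, hi⟩ := ((edges_near_finite (p := p) hX (R + C)).preimage
    hinj'.injOn).exists_notMem
  have hfar : ∀ z ∈ Eset S T p (x i) (x (i + 1)), R + C < wdist S 1 z := by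
    intro z hz
    by_contra hle
    exact hi ⟨hadj i, z, hz, not_lt.1 hle⟩
  have hmeet : ∀ γ : GRay G S, (Quot.mk (grayRel S) γ : MorseBoundary G S) ∈ K →
      ∃ l, γ.seq l ∈ Eset S T p (x i) (x (i + 1)) := by
    intro γ hγ
    obtain ⟨n, hn⟩ := (mk_mem_Mside hX (hadj i)).1 (hKi i hγ)
    obtain ⟨l, -, -, hl, -⟩ := path_cross (c := γ.seq) hX (hadj i).symm (Nat.zero_le n)
      (fun l _ _ => γ.geod.step_le l) (by rw [γ.base, one_smul]; exact hback i) (hn n le_rfl)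
    exact ⟨l, by rwa [Eset_symm]⟩
  obtain ⟨l, hl⟩ := hmeet γ hξ
  obtain ⟨l', hl'⟩ := hmeet γ' hξ'
  obtain ⟨n, c, hc, h0, hn, hz⟩ := (hC _ _ (hadj i)).2 _ hl _ hl'
  refine ⟨n, c, hc, ⟨l, h0.symm⟩, ⟨l', hn.symm⟩, fun j hj => ?_⟩
  obtain ⟨z, hz, hjz⟩ := hz j hj
  have := hfar z hz
  have t := hd.tri 1 (c j) z
  linarith

end Boundary
end MorseGoG

namespace MorseGoG

/-! ### Vertex groups are finitely generated and undistorted -/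

section Vertex

variable {G : Type*} [Group G] {S : Set G}
variable {V : Type*} [MulAction G V] {T : SimpleGraph V} {p : V}

/-- The vertex set of `x`: elements mapped to `x` by the orbit map, together with the edge sets of
all edges at `x`. -/
def Yset (S : Set G) (T : SimpleGraph V) (p x : V) : Set G :=
  {g | g • p = x ∨ ∃ b, T.Adj x b ∧ g ∈ Eset S T p x b}

theorem Yset_near (hX : Splitting S T) (x : V) :
    ∃ ρ : ℝ, 0 ≤ ρ ∧ ∀ g ∈ Yset S T p x, ∃ v ∈ MulAction.stabilizer G x, wdist S g v ≤ ρ := by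
  obtain ⟨ρ, h0, h⟩ := finite_near (S := S) x
    (((edges_at_finite (p := p) hX 1).image Prod.fst).insert p)
  refine ⟨ρ, h0, fun g hg => h g ?_⟩
  rcases hg with rfl | ⟨b, hb, hg⟩
  · left
    rw [inv_smul_smul]
  · right
    exact ⟨(g⁻¹ • x, g⁻¹ • b), ⟨hX.adj _ hb, by simpa using mul_mem_Eset hX g⁻¹ hg⟩, rfl⟩

theorem Yset_mul (hX : Splitting S T) {x : V} {v g : G} (hv : v ∈ MulAction.stabilizer G x)
    (hg : g ∈ Yset S T p x) : v * g ∈ Yset S T p x := by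
  have hv' : v • x = x := hv
  rcases hg with hg | ⟨b, hb, hg⟩
  · left
    rw [mul_smul, hg, hv']
  · refine Or.inr ⟨v • b, ?_, ?_⟩
    · simpa [hv'] using hX.adj v hb
    · simpa [hv'] using mul_mem_Eset hX v hg

theorem Yset_nonempty (hX : Splitting S T) (x : V) : (Yset S T p x).Nonempty := by
  by_cases h : p = x
  · exact ⟨1, Or.inl (by rw [one_smul, h])⟩
  · obtain ⟨b, hb, -⟩ := exists_direction hX.tree h
    obtain ⟨z, hz⟩ := Eset_nonempty (p := p) hX hb
    exact ⟨z, Or.inr ⟨b, hb, hz⟩⟩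

theorem mem_Eset_of_direction (hX : Splitting S T) {x b : V} (hb : T.Adj x b) {g : G}
    (hg : g ∈ Yset S T p x) (h : g • p ∈ halfspace T x b) : g ∈ Eset S T p x b := by
  have hT := hX.tree
  rcases hg with hg | ⟨b', hb', g', h1, h2⟩
  · rw [hg] at h
    exact absurd (left_mem_halfspace hb.symm) (halfspace_not h)
  · by_cases he : b' = b
    · subst he
      exact ⟨g', h1, h2⟩
    · rcases h2 with h2 | h2
      · exact absurd (direction_unique hT hb' hb h2.1 h) he
      · refine ⟨g', h1, Or.inl ⟨h, ?_⟩⟩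
        rw [← not_halfspace_iff hT hb]
        exact fun hside => he (direction_unique hT hb' hb h2.2 hside)

/-- Away from the vertex set of `x`, a step in the Cayley graph does not change the edge at `x`
beyond which the image under the orbit map lies. -/
theorem same_direction (hX : Splitting S T) {x b : V} (hb : T.Adj x b) {g g' : G}
    (hg : g ∉ Yset S T p x) (hgg : wdist S g g' ≤ 1) (h : g • p ∈ halfspace T x b) :
    g' • p ∈ halfspace T x b := by
  by_contra hne
  rw [not_halfspace_iff hX.tree hb] at hne
  exact hg (Or.inr ⟨b, hb, g', hgg, Or.inl ⟨h, hne⟩⟩)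

/-- `Reach A r v w`: the element `v⁻¹ * w` is a product of at most `r` elements of `A`. -/
def Reach {H : Type*} [Group H] (A : Set H) (r : ℝ) (v w : H) : Prop :=
  ∃ l : List H, (l.length : ℝ) ≤ r ∧ (∀ a ∈ l, a ∈ A) ∧ l.prod = v⁻¹ * w

theorem Reach.single {H : Type*} [Group H] {A : Set H} {v w : H} (h : v⁻¹ * w ∈ A) :
    Reach A 1 v w := ⟨[v⁻¹ * w], by simp, by simpa using h, by simp⟩

theorem Reach.trans {H : Type*} [Group H] {A : Set H} {r r' : ℝ} {u v w : H}
    (h : Reach A r u v) (h' : Reach A r' v w) : Reach A (r + r') u w := by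
  obtain ⟨l, h1, h2, h3⟩ := h
  obtain ⟨l', h1', h2', h3'⟩ := h'
  refine ⟨l ++ l', by push_cast [List.length_append]; linarith, fun a ha => ?_, ?_⟩
  · rcases List.mem_append.1 ha with ha | ha
    · exact h2 a ha
    · exact h2' a ha
  · rw [List.prod_append, h3, h3']
    group

theorem Reach.mono {H : Type*} [Group H] {A : Set H} {r r' : ℝ} {u v : H}
    (h : Reach A r u v) (hr : r ≤ r') : Reach A r' u v := by
  obtain ⟨l, h1, h2⟩ := h
  exact ⟨l, h1.trans hr, h2⟩

theorem Reach.chain {H : Type*} [Group H] {A : Set H} {w : ℕ → H} {m : ℕ}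
    (h : ∀ l < m, (w l)⁻¹ * w (l + 1) ∈ A) : Reach A m (w 0) (w m) := by
  induction m with
  | zero => exact ⟨[], by simp, by simp, by simp⟩
  | succ m ih =>
    push_cast
    exact (ih fun l hl => h l (hl.trans (Nat.lt_succ_self _))).trans
      (Reach.single (h m (Nat.lt_succ_self _)))

/-- Following a geodesic between points of the vertex set, with detours along edge sets, expresses
elements of the vertex group as short products of bounded elements. -/
theorem reach_geod (hX : Splitting S T) (p x : V) :
    ∃ ρ R M : ℝ, (∀ g ∈ Yset S T p x, ∃ v : MulAction.stabilizer G x, wdist S g v ≤ ρ) ∧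
      0 ≤ R ∧ 0 ≤ M ∧
      ∀ (L : ℕ) (c : ℕ → G), IsGeodSeg (wdist S) L c → ∀ n i j : ℕ, j = i + n → i < j → j ≤ L →
        c i ∈ Yset S T p x → c j ∈ Yset S T p x → ∀ v w : MulAction.stabilizer G x,
        wdist S (c i) v ≤ ρ → wdist S (c j) w ≤ ρ →
        Reach {u : MulAction.stabilizer G x | wdist S 1 (u : G) ≤ R} (M * n) v w := by
  have hd := hX.pm
  have hT := hX.tree
  obtain ⟨ρ, hρ, hY⟩ := Yset_near (p := p) hX x
  have hY' : ∀ g ∈ Yset S T p x, ∃ v : MulAction.stabilizer G x, wdist S g v ≤ ρ := by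
    intro g hg
    obtain ⟨v, hv, h⟩ := hY g hg
    exact ⟨⟨v, hv⟩, h⟩
  obtain ⟨C, hC0, hC⟩ := Eset_qg hX p
  set R := 2 * (C + ρ) + 2 * C + 1 with hR
  have hstep : ∀ {g g' : G} {v w : MulAction.stabilizer G x} {r s t : ℝ}, wdist S g v ≤ r →
      wdist S g' w ≤ s → wdist S g g' ≤ t → r + s + t ≤ R →
      v⁻¹ * w ∈ {u : MulAction.stabilizer G x | wdist S 1 (u : G) ≤ R} := by
    intro g g' v w r s t h1 h2 h3 h4
    show wdist S 1 ((v⁻¹ * w : MulAction.stabilizer G x) : G) ≤ R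
    have e := wdist_left (S := S) (v : G) 1 ((v⁻¹ * w : MulAction.stabilizer G x) : G)
    rw [← e]
    push_cast
    rw [mul_one, mul_inv_cancel_left]
    have t1 := hd.tri (v : G) g w
    have t2 := hd.tri g g' w
    rw [hd.comm (v : G) g] at t1
    linarith
  refine ⟨ρ, R, 2 * C + 2, hY', by positivity, by positivity, ?_⟩
  intro L c hc n
  induction n using Nat.strong_induction_on with
  | _ n ih =>
    intro i j hjn hij hjL hi hj v w hv hw
    have hn1 : (1 : ℝ) ≤ n := by
      have : 1 ≤ n := by omega
      exact_mod_cast this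
    have hMn : 2 * C + 2 ≤ (2 * C + 2) * n := le_mul_of_one_le_right (by positivity) hn1
    by_cases hsplit : ∃ k, i < k ∧ k < j ∧ c k ∈ Yset S T p x
    · obtain ⟨k, hik, hkj, hk⟩ := hsplit
      obtain ⟨u, hu⟩ := hY' _ hk
      have h1 := ih (k - i) (by omega) i k (by omega) hik (by omega) hi hk v u hv hu
      have h2 := ih (j - k) (by omega) k j (by omega) hkj hjL hk hj u w hu hw
      refine (h1.trans h2).mono (le_of_eq ?_)
      rw [← mul_add, ← Nat.cast_add]
      congr 2
      omega
    · push Not at hsplit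
      by_cases hj1 : j = i + 1
      · refine (Reach.single ?_).mono (by linarith : (1 : ℝ) ≤ (2 * C + 2) * n)
        refine hstep hv hw (t := 1) ?_ (by rw [hR]; linarith)
        rw [hj1]
        exact hc.step_le (by omega)
      · -- all intermediate points lie in the direction of one neighbour `b` of `x`
        have hi1 := hsplit (i + 1) (by omega) (by omega)
        obtain ⟨b, hb, hdir⟩ := exists_direction hT
          (show c (i + 1) • p ≠ x from fun h => hi1 (Or.inl h))
        have hall : ∀ k, i + 1 ≤ k → k ≤ j → c k • p ∈ halfspace T x b := by
          intro k hk
          induction k, hk using Nat.le_induction with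
          | base => exact fun _ => hdir
          | succ k hk ihk =>
            intro hkj
            exact same_direction hX hb (hsplit k (by omega) (by omega))
              (hc.step_le (by omega)) (ihk (by omega))
        have hiE : c i ∈ Eset S T p x b := mem_Eset_of_direction hX hb hi
          (same_direction hX hb hi1 (by rw [hd.comm]; exact hc.step_le (by omega)) hdir)
        have hjE : c j ∈ Eset S T p x b :=
          mem_Eset_of_direction hX hb hj (hall j (by omega) le_rfl)
        obtain ⟨hC1, hU⟩ := hC x b hb
        obtain ⟨m, e, he, he0, hem, hez⟩ := hU _ hiE _ hjE
        have hw' : ∀ l, ∃ u : MulAction.stabilizer G x, l ≤ m → wdist S (e l) u ≤ C + ρ := by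
          intro l
          by_cases hl : l ≤ m
          · obtain ⟨z, hz, hlz⟩ := hez l hl
            obtain ⟨u, hu⟩ := hY' z (Or.inr ⟨b, hb, hz⟩)
            exact ⟨u, fun _ => (hd.tri _ _ _).trans (add_le_add hlz hu)⟩
          · exact ⟨1, fun h => absurd h hl⟩
        choose u hu using hw'
        have r1 : Reach _ 1 v (u 0) := Reach.single (hstep hv (hu 0 (Nat.zero_le _)) (t := 0)
          (by rw [he0, hd.self]) (by rw [hR]; linarith))
        have r2 : Reach _ m (u 0) (u m) := Reach.chain fun l hl =>
          hstep (hu l hl.le) (hu (l + 1) hl) (he.step l hl) (by rw [hR]; linarith)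
        have r3 : Reach _ 1 (u m) w := Reach.single (hstep (hu m le_rfl) hw (t := 0)
          (by rw [hem, hd.self]) (by rw [hR]; linarith))
        refine ((r1.trans r2).trans r3).mono ?_
        have hm := (he.2 0 (Nat.zero_le _) m le_rfl).1
        rw [he0, hem, hc i (by omega) j hjL, abs_sub_comm, abs_of_nonneg (by simp),
          abs_sub_comm, abs_of_nonneg (by simpa using hij.le), hjn] at hm
        push_cast at hm
        have : C ≤ C * n := le_mul_of_one_le_right (by linarith) hn1
        have e1 : C * ((i : ℝ) + n - i) = C * n := by ring
        rw [e1] at hm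
        linarith

theorem wordLength_list_le (hS : Subgroup.closure S = ⊤) {H : Subgroup G} {A : Set H} {R : ℝ}
    (hA : ∀ a ∈ A, wdist S 1 (a : G) ≤ R) (l : List H) (hl : ∀ a ∈ l, a ∈ A ∨ a⁻¹ ∈ A) :
    wdist S 1 (l.prod : G) ≤ R * l.length := by
  have hd := wdist_pm hS
  induction l with
  | nil => simp [hd.self]
  | cons a l ih =>
    have h1 := ih fun b hb => hl b (List.mem_cons_of_mem _ hb)
    have h2 : wdist S 1 (a : G) ≤ R := by
      rcases hl a List.mem_cons_self with h | h
      · exact hA a h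
      · have := hA _ h
        have e := wdist_left (S := S) (a : G) 1 ((a⁻¹ : H) : G)
        rw [mul_one, Subgroup.coe_inv, mul_inv_cancel] at e
        rw [hd.comm, e]
        exact this
    have t := hd.tri 1 (a : G) ((a : G) * (l.prod : G))
    have e := wdist_left (S := S) (a : G) 1 (l.prod : G)
    rw [mul_one] at e
    rw [List.prod_cons, List.length_cons, Subgroup.coe_mul, Nat.cast_succ]
    rw [e] at t
    linarith

/-- Vertex groups are finitely generated and undistorted, because edge groups are. The
generators are the elements of the vertex group in a large ball of `G`. -/
theorem vertex_undistorted (hX : Splitting S T) (x : V) :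
    ∃ TV : Finset (MulAction.stabilizer G x),
      Subgroup.closure (TV : Set (MulAction.stabilizer G x)) = ⊤ ∧
      ∃ C : ℝ, QIncl S (MulAction.stabilizer G x) (TV : Set (MulAction.stabilizer G x)) C := by
  have hd := hX.pm
  obtain ⟨ρ, R, M, hY, hR, hM, hreach⟩ := reach_geod hX x x
  set A : Set (MulAction.stabilizer G x) := {u | wdist S 1 (u : G) ≤ R} with hA
  have hAf : A.Finite := (ball_finite hX.gen hX.fin 1 R).preimage Subtype.val_injective.injOn
  obtain ⟨g₀, hg₀⟩ := Yset_nonempty (p := x) hX x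
  obtain ⟨v₀, hv₀⟩ := hY g₀ hg₀
  set B := 2 * wdist S 1 (v₀ : G) + 2 * wdist S 1 g₀ with hB
  have hB0 : 0 ≤ B := by
    have := hd.nonneg 1 (v₀ : G)
    have := hd.nonneg 1 g₀
    positivity
  have key : ∀ v : MulAction.stabilizer G x, Reach A (M * (wdist S 1 (v : G) + B)) 1 v := by
    intro v
    -- conjugating by `v₀` compensates for the basepoint `g₀` of the geodesic
    set u : MulAction.stabilizer G x := v₀ * v * v₀⁻¹ with hu
    obtain ⟨n, c, hn, hc, hc0, hcn⟩ := exists_geodSeg hX.gen g₀ ((u : G) * g₀)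
    have hnle : (n : ℝ) ≤ wdist S 1 (v : G) + B := by
      have inv1 : ∀ a : G, wdist S 1 a⁻¹ = wdist S 1 a := by
        intro a
        have := wdist_left (S := S) a 1 a⁻¹
        rw [mul_one, mul_inv_cancel] at this
        rw [← this, hd.comm]
      have mul1 : ∀ a b : G, wdist S 1 (a * b) ≤ wdist S 1 a + wdist S 1 b := by
        intro a b
        have := wdist_left (S := S) a 1 b
        rw [mul_one] at this
        rw [← this]
        exact hd.tri _ _ _
      have e1 := hd.tri g₀ 1 ((u : G) * g₀)
      have e2 := mul1 (u : G) g₀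
      have e3 := mul1 ((v₀ : G) * v) (v₀ : G)⁻¹
      have e4 := mul1 (v₀ : G) (v : G)
      have e5 := inv1 (v₀ : G)
      have e6 : (u : G) = (v₀ : G) * v * (v₀ : G)⁻¹ := rfl
      rw [hd.comm g₀ 1, ← hn] at e1
      rw [e6] at e1 e2
      rw [hB]
      linarith
    by_cases hn0 : n = 0
    · have hu1 : (u : G) = 1 := by
        rw [hn0, hc0] at hcn
        exact (mul_eq_right.1 hcn.symm)
      have hv1 : v = 1 := by
        have : u = 1 := Subtype.ext hu1
        rw [hu] at this
        exact (conj_eq_one_iff).1 this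
      rw [hv1]
      have := hd.nonneg 1 ((1 : MulAction.stabilizer G x) : G)
      exact ⟨[], by simp; positivity, by simp, by simp⟩
    · have h := hreach n c hc n 0 n (by simp) (Nat.pos_of_ne_zero hn0) le_rfl (by rwa [hc0])
        (by rw [hcn]; exact Yset_mul hX u.2 hg₀) v₀ (u * v₀) (by rwa [hc0])
        (by
          rw [hcn]
          show wdist S ((u : G) * g₀) ((u : G) * (v₀ : G)) ≤ ρ
          rw [wdist_left]
          exact hv₀)
      obtain ⟨l, h1, h2, h3⟩ := h.mono (mul_le_mul_of_nonneg_left hnle hM)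
      refine ⟨l, h1, h2, ?_⟩
      rw [h3, hu]
      group
  refine ⟨hAf.toFinset, ?_, ?_⟩
  · rw [hAf.coe_toFinset, eq_top_iff]
    intro v _
    obtain ⟨l, -, h2, h3⟩ := key v
    have : v = l.prod := by rw [h3]; group
    rw [this]
    exact Subgroup.list_prod_mem _ fun a ha => Subgroup.subset_closure (h2 a ha)
  · rw [hAf.coe_toFinset]
    refine ⟨max 1 (max M (max (M * B) R)), le_max_left _ _, fun h h' => ?_⟩
    set C := max 1 (max M (max (M * B) R)) with hC
    have hC1 : M ≤ C := (le_max_left _ _).trans (le_max_right _ _)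
    have hC2 : M * B ≤ C :=
      (le_max_left _ _).trans ((le_max_right _ _).trans (le_max_right _ _))
    have hC3 : R ≤ C := (le_max_right _ _).trans ((le_max_right _ _).trans (le_max_right _ _))
    have hAgen : Subgroup.closure A = ⊤ := by
      rw [eq_top_iff]
      intro v _
      obtain ⟨l, -, h2, h3⟩ := key v
      have : v = l.prod := by rw [h3]; group
      rw [this]
      exact Subgroup.list_prod_mem _ fun a ha => Subgroup.subset_closure (h2 a ha)
    have e1 : wdist S (h : G) (h' : G) = wdist S 1 ((h⁻¹ * h' : MulAction.stabilizer G x) : G) := by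
      have := wdist_left (S := S) (h : G) 1 ((h⁻¹ * h' : MulAction.stabilizer G x) : G)
      rw [← this]
      push_cast
      rw [mul_one, mul_inv_cancel_left]
    constructor
    · obtain ⟨l, h1, h2, h3⟩ := key (h⁻¹ * h')
      rw [← e1] at h1
      have h4 : (wordLength A (h⁻¹ * h') : ℝ) ≤ l.length := by
        have := wordLength_le (S := A) (l := l) (fun a ha => Or.inl (h2 a ha))
        rw [h3, inv_one, one_mul] at this
        exact_mod_cast this
      have h5 := mul_le_mul_of_nonneg_right hC1 (hd.nonneg (h : G) h')
      show (wordLength A (h⁻¹ * h') : ℝ) ≤ _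
      rw [mul_add] at h1
      linarith
    · obtain ⟨l, h1, h2, h3⟩ := wordLength_spec hAgen (h⁻¹ * h')
      have h4 := wordLength_list_le hX.gen (A := A) (fun a ha => ha) l h2
      rw [h3, ← e1, h1] at h4
      refine h4.trans ?_
      have h5 := mul_le_mul_of_nonneg_right hC3
        (Nat.cast_nonneg (α := ℝ) (wordLength A (h⁻¹ * h')))
      show _ ≤ C * (wordLength A (h⁻¹ * h') : ℝ) + C
      have : (0 : ℝ) ≤ C := zero_le_one.trans (le_max_left _ _)
      linarith

/-- Morse rays that do not point away from `x` stay close to the vertex group of `x`, uniformly in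
terms of the Morse gauge. -/
theorem ray_near_vertex (hX : Splitting S T) (x : V) (N : ℝ → ℝ) :
    ∃ D : ℝ, 0 ≤ D ∧ ∀ γ : GRay G S, MorseSet (wdist S) N (range γ.seq) →
      (∀ b, T.Adj x b → (Quot.mk (grayRel S) γ : MorseBoundary G S) ∈ Mside S T p b x) →
      ∀ k, ∃ v ∈ MulAction.stabilizer G x, wdist S (γ.seq k) v ≤ D := by
  have hd := hX.pm
  have hT := hX.tree
  obtain ⟨ρ, hρ, hY⟩ := Yset_near (p := p) hX x
  have h0 : ∃ ρ₀ : ℝ, 0 ≤ ρ₀ ∧ ∀ b, T.Adj x b → p ∈ halfspace T x b →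
      InNbhd (wdist S) (Eset S T p x b) ρ₀ 1 := by
    by_cases h : p = x
    · exact ⟨0, le_rfl, fun b hb hp => by
        rw [h] at hp
        exact absurd (left_mem_halfspace hb.symm) (halfspace_not hp)⟩
    · obtain ⟨b₀, hb₀, hp₀⟩ := exists_direction hT h
      obtain ⟨z, hz⟩ := Eset_nonempty (p := p) hX hb₀
      refine ⟨wdist S 1 z, hd.nonneg _ _, fun b hb hp => ⟨z, ?_, le_rfl⟩⟩
      rwa [direction_unique hT hb hb₀ hp hp₀]
  obtain ⟨ρ₀, hρ₀, h0⟩ := h0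
  obtain ⟨D, hD⟩ := ray_between hX p N hρ₀
  refine ⟨max (D + ρ) ρ, le_max_of_le_right hρ, fun γ hN hγ k => ?_⟩
  by_cases hk : γ.seq k ∈ Yset S T p x
  · obtain ⟨v, hv, h⟩ := hY _ hk
    exact ⟨v, hv, h.trans (le_max_right _ _)⟩
  · obtain ⟨b, hb, hdir⟩ := exists_direction hT
      (show γ.seq k • p ≠ x from fun h => hk (Or.inl h))
    obtain ⟨n, hn⟩ := (mk_mem_Mside hX hb.symm).1 (hγ b hb)
    obtain ⟨j, hkj, -, hj, -⟩ := path_cross (c := γ.seq) hX hb (le_max_left k n)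
      (fun l _ _ => γ.geod.step_le l) hdir (hn _ (le_max_right k n))
    have hi : ∃ i ≤ k, InNbhd (wdist S) (Eset S T p x b) ρ₀ (γ.seq i) := by
      rcases halfspace_or hT hb p with hp | hp
      · exact ⟨0, Nat.zero_le _, by rw [γ.base]; exact h0 b hb hp⟩
      · obtain ⟨i, -, hik, hi, -⟩ := path_cross (c := γ.seq) hX hb.symm (Nat.zero_le k)
          (fun l _ _ => γ.geod.step_le l) (by rwa [γ.base, one_smul]) hdir
        rw [Eset_symm] at hi
        exact ⟨i, hik.le, _, hi, by rwa [hd.self]⟩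
    obtain ⟨i, hik, hi⟩ := hi
    obtain ⟨z, hz, hkz⟩ := hD x b hb γ.seq γ.geod hN i k j hik hkj hi
      ⟨_, hj, by rwa [hd.self]⟩
    obtain ⟨v, hv, hzv⟩ := hY z (Or.inr ⟨b, hb, hz⟩)
    exact ⟨v, hv, (hd.tri _ _ _).trans ((add_le_add hkz hzv).trans (le_max_left _ _))⟩

end Vertex
end MorseGoG

namespace MorseGoG

/-! ### Comparing the boundary of a vertex group with the boundary of the group -/

section VertexBoundary

variable {G : Type*} [Group G] {S : Set G} {H : Subgroup G} {TH : Set H}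

/-- The ray `β` of the subgroup `H` and the ray `γ` of `G` are asymptotic in `G`. -/
def Asym (β : GRay H TH) (γ : GRay G S) : Prop :=
  BddHD (wdist S) (range fun n => (β.seq n : G)) (range γ.seq)

theorem QIncl.bddHD_iff {C : ℝ} (hq : QIncl S H TH C) {β β' : ℕ → H} :
    BddHD (wdist TH) (range β) (range β') ↔
      BddHD (wdist S) (range fun n => (β n : G)) (range fun n => (β' n : G)) := by
  have hC : 0 ≤ C := zero_le_one.trans hq.1
  constructor
  · rintro ⟨r, h1, h2⟩
    refine ⟨C * r + C, ?_, ?_⟩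
    · rintro _ ⟨n, rfl⟩
      obtain ⟨_, ⟨m, rfl⟩, hm⟩ := h1 _ ⟨n, rfl⟩
      exact ⟨_, ⟨m, rfl⟩, (hq.2 _ _).2.trans (by gcongr)⟩
    · rintro _ ⟨n, rfl⟩
      obtain ⟨_, ⟨m, rfl⟩, hm⟩ := h2 _ ⟨n, rfl⟩
      exact ⟨_, ⟨m, rfl⟩, (hq.2 _ _).2.trans (by gcongr)⟩
  · rintro ⟨r, h1, h2⟩
    refine ⟨C * r + C, ?_, ?_⟩
    · rintro _ ⟨n, rfl⟩
      obtain ⟨_, ⟨m, rfl⟩, hm⟩ := h1 _ ⟨n, rfl⟩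
      exact ⟨_, ⟨m, rfl⟩, (hq.2 _ _).1.trans (by gcongr)⟩
    · rintro _ ⟨n, rfl⟩
      obtain ⟨_, ⟨m, rfl⟩, hm⟩ := h2 _ ⟨n, rfl⟩
      exact ⟨_, ⟨m, rfl⟩, (hq.2 _ _).1.trans (by gcongr)⟩

/-- The natural map from the relative Morse boundary of `H` to the Morse boundary of `G` is well
defined and injective. -/
theorem Asym.mk_eq_iff (hS : Subgroup.closure S = ⊤) (hT : Subgroup.closure TH = ⊤) {C : ℝ}
    (hq : QIncl S H TH C) {β β' : GRay H TH} {γ γ' : GRay G S} (h : Asym β γ) (h' : Asym β' γ') :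
    (Quot.mk (grayRel TH) β : MorseBoundary H TH) = Quot.mk (grayRel TH) β' ↔
      (Quot.mk (grayRel S) γ : MorseBoundary G S) = Quot.mk (grayRel S) γ' := by
  have hd := wdist_pm hS
  rw [quot_eq_iff hS, quot_eq_iff hT]
  refine hq.bddHD_iff.trans ⟨fun e => ?_, fun e => ?_⟩
  · exact (h.symm.trans hd e).trans hd h'
  · exact (h.trans hd e).trans hd h'.symm

variable {V : Type*} [MulAction G V] {T : SimpleGraph V} {p : V}

/-- Morse rays of `G` that do not point away from `x` have companion rays in the vertex group of
`x`, with uniform gauge and uniform distance. -/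
theorem exists_asym (hX : Splitting S T) {x : V} {TV : Set (MulAction.stabilizer G x)}
    (hT : Subgroup.closure TV = ⊤) (hTf : TV.Finite) {C : ℝ}
    (hq : QIncl S (MulAction.stabilizer G x) TV C) (N : ℝ → ℝ) :
    ∃ (N' : ℝ → ℝ) (D' : ℝ), ∀ γ : GRay G S, MorseSet (wdist S) N (range γ.seq) →
      (∀ b, T.Adj x b → (Quot.mk (grayRel S) γ : MorseBoundary G S) ∈ Mside S T p b x) →
      ∃ β : GRay (MulAction.stabilizer G x) TV, MorseSet (wdist TV) N' (range β.seq) ∧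
        (∀ n, ∃ m, wdist S (β.seq n) (γ.seq m) ≤ D') ∧
        (∀ m, ∃ n, wdist S (γ.seq m) (β.seq n) ≤ D') := by
  obtain ⟨D, hD0, hD⟩ := ray_near_vertex (p := p) hX x N
  obtain ⟨N', D', h⟩ := transfer hX.gen hT hTf hq N hD0
  refine ⟨N', D', fun γ hN hγ => ?_⟩
  obtain ⟨β, h0, hg, hm, h1, h2⟩ := h γ.seq γ.base γ.geod hN (hD γ hN hγ)
  exact ⟨⟨β, h0, hg, N', hm⟩, hm, h1, h2⟩

theorem asym_of_near {β : GRay H TH} {γ : GRay G S} {D : ℝ}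
    (h1 : ∀ n, ∃ m, wdist S (β.seq n) (γ.seq m) ≤ D)
    (h2 : ∀ m, ∃ n, wdist S (γ.seq m) (β.seq n) ≤ D) : Asym β γ := by
  refine ⟨D, ?_, ?_⟩
  · rintro _ ⟨n, rfl⟩
    obtain ⟨m, hm⟩ := h1 n
    exact ⟨_, ⟨m, rfl⟩, hm⟩
  · rintro _ ⟨m, rfl⟩
    obtain ⟨n, hn⟩ := h2 m
    exact ⟨_, ⟨n, rfl⟩, hn⟩

/-- The image in the Morse boundary of `G` of a set `C` of boundary points of the stabiliser of
`x`, cut down to the points that lie on the side of `x` of every edge at `x`. -/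
def push (S : Set G) (T : SimpleGraph V) (p x : V) (TV : Set (MulAction.stabilizer G x))
    (C : Set (MorseBoundary (MulAction.stabilizer G x) TV)) : Set (MorseBoundary G S) :=
  {ξ | (∀ b, T.Adj x b → ξ ∈ Mside S T p b x) ∧
    ∃ (γ : GRay G S) (β : GRay (MulAction.stabilizer G x) TV),
      Quot.mk (grayRel S) γ = ξ ∧ Quot.mk (grayRel TV) β ∈ C ∧ Asym β γ}

/-- Closed sets are mapped to closed sets. A limit of `N`-Morse rays is followed by a limit of
the companion rays in the vertex group, which are uniformly Morse and uniformly close. -/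
theorem isClosed_push (hX : Splitting S T) {x : V} {TV : Set (MulAction.stabilizer G x)}
    (hT : Subgroup.closure TV = ⊤) (hTf : TV.Finite) {C₀ : ℝ}
    (hq : QIncl S (MulAction.stabilizer G x) TV C₀)
    {C : Set (MorseBoundary (MulAction.stabilizer G x) TV)} (hC : IsClosed C) :
    IsClosed (push S T p x TV C) := by
  have hd := hX.pm
  have hdV := wdist_pm hT
  have hC₀ : 0 ≤ C₀ := zero_le_one.trans hq.1
  rw [isClosed_boundary_iff]
  intro N
  rw [isClosed_NGRays_iff]
  intro γ hγ
  have hQ : ∀ b, T.Adj x b →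
      (Quot.mk (grayRel S) γ.1 : MorseBoundary G S) ∈ Mside S T p b x := by
    intro b hb
    have hcl := isClosed_boundary_iff.1 (isClosed_Mside (p := p) hX hb.symm) N
    refine isClosed_NGRays_iff.1 hcl γ fun m => ?_
    obtain ⟨γ', h, h'⟩ := hγ m
    exact ⟨γ', h.1 b hb, h'⟩
  refine ⟨hQ, ?_⟩
  obtain ⟨N', D', htr⟩ := exists_asym (p := p) hX hT hTf hq N
  choose γm hγm hagree using hγ
  choose β hβN hβ1 hβ2 using fun m => htr (γm m).1 (γm m).2 (hγm m).1
  have hβC : ∀ m, (Quot.mk (grayRel TV) (β m) :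
      MorseBoundary (MulAction.stabilizer G x) TV) ∈ C := by
    intro m
    obtain ⟨-, γ'', β'', e, hβ'', has⟩ := hγm m
    have h := (Asym.mk_eq_iff hX.gen hT hq has (asym_of_near (hβ1 m) (hβ2 m))).2 e
    rwa [← h]
  -- the lengths in the vertex group are controlled by those in `G`, and conversely
  have len : ∀ (β : GRay (MulAction.stabilizer G x) TV) (n : ℕ), wdist TV 1 (β.seq n) = n := by
    intro β n
    have := β.geod 0 n
    rw [β.base] at this
    rw [this]
    simp
  have lenG : ∀ (γ : GRay G S) (n : ℕ), wdist S 1 (γ.seq n) = n := by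
    intro γ n
    have := γ.geod 0 n
    rw [γ.base] at this
    rw [this]
    simp
  obtain ⟨b, hb⟩ := ultralimit (β := fun m => (β m).seq)
    (F := fun k => {g | wdist TV 1 g ≤ k}) (fun k => ball_finite hT hTf 1 k)
    (fun k => Eventually.of_forall fun m => (len (β m) k).le)
  have hbg : IsGeodSeq (wdist TV) b :=
    limit_geod hb fun K => Eventually.of_forall fun m i _ j _ => (β m).geod i j
  have hbN : MorseSet (wdist TV) N' (range b) :=
    limit_morse hdV hb (fun m => (β m).geod) hβN
  have hb0 : b 0 = 1 := by
    obtain ⟨m, hm⟩ := (hb 0).exists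
    rw [← hm 0 le_rfl, (β m).base]
  have hge : ∀ L : ℕ, ∀ᶠ m in (hyperfilter ℕ : Filter ℕ), L ≤ m := fun L =>
    Nat.hyperfilter_le_atTop (eventually_ge_atTop L)
  set bR : GRay (MulAction.stabilizer G x) TV := ⟨b, hb0, hbg, N', hbN⟩ with hbR
  have hbC : (Quot.mk (grayRel TV) bR : MorseBoundary (MulAction.stabilizer G x) TV) ∈ C := by
    refine isClosed_NGRays_iff.1 (isClosed_boundary_iff.1 hC N') ⟨bR, hbN⟩ fun m => ?_
    obtain ⟨m', hm'⟩ := (hb m).exists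
    exact ⟨⟨β m', hβN m'⟩, hβC m', hm'⟩
  refine ⟨γ.1, bR, rfl, hbC, asym_of_near (D := D') (fun n => ?_) (fun l => ?_)⟩
  · obtain ⟨m, hm, hmL⟩ := ((hb n).and (hge ⌈C₀ * n + C₀ + D'⌉₊)).exists
    obtain ⟨l, hl⟩ := hβ1 m n
    have hlm : l ≤ m := by
      have h1 := hd.tri 1 ((β m).seq n : G) ((γm m).1.seq l)
      have h2 := (hq.2 1 ((β m).seq n)).2
      rw [lenG] at h1
      rw [len, Subgroup.coe_one] at h2
      have h3 : (l : ℝ) ≤ m := by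
        linarith [Nat.le_ceil (C₀ * n + C₀ + D'), (Nat.cast_le (α := ℝ)).2 hmL]
      exact_mod_cast h3
    refine ⟨l, ?_⟩
    rw [← hagree m l hlm]
    show wdist S (b n : G) _ ≤ _
    rw [← hm n le_rfl]
    exact hl
  · obtain ⟨m, hm, hml⟩ := ((hb ⌈C₀ * (l + D') + C₀⌉₊).and (hge l)).exists
    obtain ⟨n, hn⟩ := hβ2 m l
    have hnK : n ≤ ⌈C₀ * (l + D') + C₀⌉₊ := by
      have h1 := hd.tri 1 ((γm m).1.seq l) ((β m).seq n : G)
      have h2 := (hq.2 1 ((β m).seq n)).1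
      rw [lenG] at h1
      rw [len, Subgroup.coe_one] at h2
      have h3 : C₀ * wdist S 1 ((β m).seq n : G) ≤ C₀ * (l + D') :=
        mul_le_mul_of_nonneg_left (by linarith) hC₀
      have h4 : (n : ℝ) ≤ ⌈C₀ * (l + D') + C₀⌉₊ := by
        linarith [Nat.le_ceil (C₀ * (l + D') + C₀)]
      exact_mod_cast h4
    refine ⟨n, ?_⟩
    rw [← hagree m l hml]
    show wdist S _ (b n : G) ≤ _
    rw [← hm n hnK]
    exact hn

/-- A connected set of boundary points lying on the side of `x` of every edge at `x` comes from a
connected subset of the relative Morse boundary of the stabiliser of `x`. -/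
theorem subsingleton_of_vertex (hX : Splitting S T) {x : V} {TV : Set (MulAction.stabilizer G x)}
    (hT : Subgroup.closure TV = ⊤) (hTf : TV.Finite) {C₀ : ℝ}
    (hq : QIncl S (MulAction.stabilizer G x) TV C₀)
    (hvert : IsTotallyDisconnected (relBdryIn S (MulAction.stabilizer G x) TV))
    {K : Set (MorseBoundary G S)} (hK : IsPreconnected K)
    (hKx : ∀ b, T.Adj x b → K ⊆ Mside S T p b x) : K.Subsingleton := by
  have hd := hX.pm
  have lift : ∀ ξ ∈ K, ∃ (γ : GRay G S) (β : GRay (MulAction.stabilizer G x) TV),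
      Quot.mk (grayRel S) γ = ξ ∧ Asym β γ := by
    intro ξ hξ
    obtain ⟨γ, rfl⟩ := Quot.exists_rep ξ
    obtain ⟨N, hN⟩ := γ.morse
    obtain ⟨N', D', h⟩ := exists_asym (p := p) hX hT hTf hq N
    obtain ⟨β, -, h1, h2⟩ := h γ hN fun b hb => hKx b hb hξ
    exact ⟨γ, β, rfl, asym_of_near h1 h2⟩
  set K' : Set (MorseBoundary (MulAction.stabilizer G x) TV) :=
    {η | ∃ (β : GRay (MulAction.stabilizer G x) TV) (γ : GRay G S),
      Quot.mk (grayRel TV) β = η ∧ Quot.mk (grayRel S) γ ∈ K ∧ Asym β γ} with hK'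
  have hsub : K' ⊆ relBdryIn S (MulAction.stabilizer G x) TV := by
    rintro _ ⟨β, γ, rfl, -, h⟩
    exact ⟨β, rfl, BddHD.isMorse hd h.symm γ.morse⟩
  have hpre : IsPreconnected K' := by
    rw [isPreconnected_closed_iff] at hK ⊢
    intro t t' ht ht' hcov hnt hnt'
    have meets : ∀ {t : Set (MorseBoundary (MulAction.stabilizer G x) TV)},
        (K' ∩ t).Nonempty → (K ∩ push S T p x TV t).Nonempty := by
      rintro t ⟨_, ⟨β, γ, rfl, hγ, h⟩, hβ⟩
      exact ⟨_, hγ, fun b hb => hKx b hb hγ, γ, β, rfl, hβ, h⟩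
    obtain ⟨ξ, hξ, ⟨-, γ, β, e, hβ, h⟩, -, γ', β', e', hβ', h'⟩ :=
      hK _ _ (isClosed_push (p := p) hX hT hTf hq ht) (isClosed_push (p := p) hX hT hTf hq ht')
        (by
          intro ξ hξ
          obtain ⟨γ, β, rfl, h⟩ := lift ξ hξ
          rcases hcov ⟨β, γ, rfl, hξ, h⟩ with hβ | hβ
          · exact Or.inl ⟨fun b hb => hKx b hb hξ, γ, β, rfl, hβ, h⟩
          · exact Or.inr ⟨fun b hb => hKx b hb hξ, γ, β, rfl, hβ, h⟩)
        (meets hnt) (meets hnt')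
    have hβ_eq := (Asym.mk_eq_iff hX.gen hT hq h' h).2 (e'.trans e.symm)
    rw [hβ_eq] at hβ'
    exact ⟨_, ⟨β, γ, rfl, by rwa [e], h⟩, hβ, hβ'⟩
  have hss := hvert K' hsub hpre
  intro ξ hξ ξ' hξ'
  obtain ⟨γ, β, rfl, h⟩ := lift ξ hξ
  obtain ⟨γ', β', rfl, h'⟩ := lift ξ' hξ'
  exact (Asym.mk_eq_iff hX.gen hT hq h h').1 (hss ⟨β, γ, rfl, hξ, h⟩ ⟨β', γ', rfl, hξ', h'⟩)

end VertexBoundary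
end MorseGoG

namespace MorseGoG

/-- **Corollary** (Statement 1).  Under the assumptions of Theorem A, if the relative Morse
boundary `(∂_M V, G)` is totally disconnected for every vertex group `V`, then `∂_M G` is
totally disconnected. -/
theorem morse_boundary_totally_disconnected
    {G VT : Type*} [Group G] [MulAction G VT]
    (S : Finset G) (hSgen : Subgroup.closure (S : Set G) = ⊤)
    (T : SimpleGraph VT) (hact : ActsOnTree G T)
    (hedge : ∀ a b : VT, T.Adj a b →
      FGUndistorted (S : Set G) (edgeStab G a b) ∧
      RelMorseEmpty (S : Set G) (edgeStab G a b))
    (hvert : ∀ x : VT, ∀ TV : Finset (MulAction.stabilizer G x),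
      Subgroup.closure (TV : Set (MulAction.stabilizer G x)) = ⊤ →
      IsTotallyDisconnected
        (relBdryIn (S : Set G) (MulAction.stabilizer G x)
          (TV : Set (MulAction.stabilizer G x)))) :
    TotallyDisconnectedSpace (MorseBoundary G (S : Set G)) := by
  have hX : Splitting (S : Set G) T := ⟨hSgen, S.finite_toSet, hact, hedge⟩
  obtain ⟨p⟩ := hX.tree.1.nonempty
  refine ⟨fun K _ hK => ?_⟩
  by_cases h : ∀ x, ∃ b, T.Adj x b ∧ K ⊆ Mside (S : Set G) T p x b
  · exact subsingleton_of_end hX h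
  · push Not at h
    obtain ⟨x, hx⟩ := h
    obtain ⟨TV, hTV, C, hq⟩ := vertex_undistorted hX x
    exact subsingleton_of_vertex (p := p) hX hTV TV.finite_toSet hq (hvert x TV hTV) hK
      fun b hb => (preconnected_side hX hb hK).resolve_left (hx b hb)

end MorseGoG
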